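/- arXiv:math/0304332 — 3 statements merged into one kernel-verified Lean document; each statement's English description precedes it below -/
import Mathlib

section
/- Every entire function on the complex plane that omits two distinct complex values is constant. -/
/-!
The proof goes through Bloch's theorem, following Landau and König.

Bloch's theorem (`exists_ball_subset_range`), in the form needed here, says that the range of a
nonconstant entire function contains discs of every radius. It follows from a quantitative open
mapping statement (`ball_subset_range_of_deriv_le`) applied at a maximum of
`z ↦ (R - |z - z₀|) |g' z|` on a large disc.

An entire function omitting `1` and `-1` has the form `cos (π F)` with `F` entire
(`exists_eq_cos_pi_mul`). If `f` omits `1` and `-1` and `f = cos (π F)`, then `F` omits every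
integer, so `F` omits `1` and `-1` as well and `F = cos (π g)`. Now `g` omits every `p` with
`cos (π p) ∈ ℤ`, and such points lie within distance `2` of every complex number
(`exists_cos_pi_mul_eq_intCast`). The range of `g` therefore contains no disc of radius `3`, hence
`g` is constant, and so is `f`. The case of arbitrary omitted values `a ≠ b` reduces to this one by
an affine change of variable in the target.
-/

open Complex Metric in
/-- A quantitative open mapping theorem: if `|g'| ≤ 2 |g' a|` on the disc of radius `r` about `a`,
the Schwarz lemma applied to `g'` shows that `g` is close to its linear part on the disc of radius
`r / 6`, which bounds `|g - g a|` from below on its boundary circle. -/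
theorem ball_subset_range_of_deriv_le {g : ℂ → ℂ} (hg : Differentiable ℂ g) {a : ℂ} {r : ℝ}
    (hr : 0 < r) (ha : deriv g a ≠ 0)
    (hbd : ∀ z ∈ ball a r, ‖deriv g z‖ ≤ 2 * ‖deriv g a‖) :
    ball (g a) (r * ‖deriv g a‖ / 24) ⊆ Set.range g := by
  have hM : 0 < ‖deriv g a‖ := norm_pos_iff.2 ha
  set M := ‖deriv g a‖ with hMdef
  have hg' : Differentiable ℂ (deriv g) := hg.deriv
  have hmaps : Set.MapsTo (deriv g) (ball a r) (closedBall (deriv g a) (3 * M)) := by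
    intro z hz
    rw [mem_closedBall, dist_eq_norm]
    linarith [norm_sub_le (deriv g z) (deriv g a), hbd z hz]
  have hclose : ∀ z ∈ closedBall a (r / 6), ‖deriv g z - deriv g a‖ ≤ M / 2 := by
    intro z hz
    rw [mem_closedBall] at hz
    have h := dist_le_div_mul_dist_of_mapsTo_ball hg'.differentiableOn hmaps
      (mem_ball.2 (by linarith : dist z a < r))
    rw [dist_eq_norm] at h
    calc _ ≤ _ := h
      _ ≤ 3 * M / r * (r / 6) := by gcongr
      _ = M / 2 := by field_simp; norm_num
  have hlow : ∀ z ∈ sphere a (r / 6), r * M / 12 ≤ ‖g z - g a‖ := by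
    intro z hz
    have hz' : ‖z - a‖ = r / 6 := by rwa [mem_sphere, dist_eq_norm] at hz
    have hd : ∀ w, HasDerivAt (fun w => g w - deriv g a * w) (deriv g w - deriv g a) w := by
      intro w
      have h := (hg w).hasDerivAt.sub ((hasDerivAt_id w).const_mul (deriv g a))
      rw [mul_one] at h
      exact h
    have h := (convex_closedBall a (r / 6)).norm_image_sub_le_of_norm_hasDerivWithin_le
      (fun w _ => (hd w).hasDerivWithinAt) hclose
      (mem_closedBall_self (by positivity)) (sphere_subset_closedBall hz)
    have e : deriv g a * (z - a) =
        (g z - g a) - ((g z - deriv g a * z) - (g a - deriv g a * a)) := by ring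
    have h2 := norm_sub_le (g z - g a) ((g z - deriv g a * z) - (g a - deriv g a * a))
    rw [← e, norm_mul, hz', ← hMdef] at h2
    rw [hz'] at h
    linarith
  have hfreq : ∃ᶠ z in nhds a, g z ≠ g a := by
    intro hev
    apply ha
    have : g =ᶠ[nhds a] fun _ => g a := hev.mono fun z hz => not_not.1 hz
    rw [this.deriv_eq, deriv_const]
  have h := (hg.diffContOnCl (s := ball a (r / 6))).ball_subset_image_closedBall
    (by positivity) hlow hfreq
  rw [show r * M / 24 = r * M / 12 / 2 by ring]
  exact h.trans (Set.image_subset_range _ _)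

open Metric in
/-- **Bloch's theorem** for entire functions: the range of an entire function with nonvanishing
derivative at some point contains discs of every radius. -/
theorem exists_ball_subset_range {g : ℂ → ℂ} (hg : Differentiable ℂ g) {z₀ : ℂ}
    (hz₀ : deriv g z₀ ≠ 0) {ρ : ℝ} (hρ : 0 < ρ) : ∃ w, ball w ρ ⊆ Set.range g := by
  have hM : 0 < ‖deriv g z₀‖ := norm_pos_iff.2 hz₀
  obtain ⟨R, hR, hRM⟩ : ∃ R : ℝ, 0 < R ∧ R * ‖deriv g z₀‖ = 48 * ρ :=
    ⟨48 * ρ / ‖deriv g z₀‖, by positivity, by field_simp⟩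
  have hcont : Continuous fun z => (R - ‖z - z₀‖) * ‖deriv g z‖ := by
    have := hg.deriv.continuous
    fun_prop
  obtain ⟨p, hp, hmax⟩ := (isCompact_closedBall z₀ R).exists_isMaxOn
    ⟨z₀, mem_closedBall_self hR.le⟩ hcont.continuousOn
  have hmax' : ∀ z, ‖z - z₀‖ ≤ R →
      (R - ‖z - z₀‖) * ‖deriv g z‖ ≤ (R - ‖p - z₀‖) * ‖deriv g p‖ :=
    fun z hz => hmax (mem_closedBall.2 (by rwa [dist_eq_norm]))
  have h0 : 48 * ρ ≤ (R - ‖p - z₀‖) * ‖deriv g p‖ := by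
    have := hmax' z₀ (by simpa using hR.le)
    rwa [sub_self, norm_zero, sub_zero, hRM] at this
  have hpos : 0 < (R - ‖p - z₀‖) * ‖deriv g p‖ := by linarith
  have hgp : 0 < ‖deriv g p‖ := by
    refine (norm_nonneg _).lt_of_ne fun h => ?_
    rw [← h, mul_zero] at hpos
    exact lt_irrefl _ hpos
  have ht : 0 < R - ‖p - z₀‖ := pos_of_mul_pos_left hpos hgp.le
  refine ⟨g p, (ball_subset_ball ?_).trans
    (ball_subset_range_of_deriv_le hg (half_pos ht) (norm_pos_iff.1 hgp) fun z hz => ?_)⟩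
  · linarith
  · rw [mem_ball, dist_eq_norm] at hz
    -- In the disc of half the distance to the boundary, that distance drops by at most a half.
    have htri : ‖z - z₀‖ ≤ ‖z - p‖ + ‖p - z₀‖ := norm_sub_le_norm_sub_add_norm_sub z p z₀
    have h1 := hmax' z (by linarith)
    have h2 : (R - ‖p - z₀‖) / 2 * ‖deriv g z‖ ≤ (R - ‖z - z₀‖) * ‖deriv g z‖ := by
      gcongr
      linarith
    refine le_of_mul_le_mul_left (h2.trans (h1.trans_eq ?_)) (half_pos ht)
    ring

/-- A nowhere vanishing entire function `f` has an entire logarithm, namely a suitably normalized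
primitive of `f' / f`. -/
theorem exists_eq_exp {f : ℂ → ℂ} (hf : Differentiable ℂ f) (h0 : ∀ z, f z ≠ 0) :
    ∃ h : ℂ → ℂ, Differentiable ℂ h ∧ ∀ z, f z = Complex.exp (h z) := by
  obtain ⟨L, hL⟩ := (hf.deriv.div hf h0).isExactOn_univ
  have hL' : ∀ z, HasDerivAt L (deriv f z / f z) z := fun z => hL z (Set.mem_univ z)
  have hd : ∀ z, HasDerivAt (fun z => f z * Complex.exp (-L z)) 0 z := by
    intro z
    have h := (hf z).hasDerivAt.mul (hL' z).neg.cexp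
    have e : deriv f z * Complex.exp (-L z) +
        f z * (Complex.exp (-L z) * -(deriv f z / f z)) = 0 := by
      field_simp [h0 z]
      ring
    rw [← e]
    exact h
  have hconst := is_const_of_deriv_eq_zero (fun z => (hd z).differentiableAt)
    (fun z => (hd z).deriv)
  refine ⟨fun z => L z + (Complex.log (f 0) - L 0), fun z =>
    ((hL' z).differentiableAt.add_const _), fun z => ?_⟩
  have h1 : f z * Complex.exp (-L z) = f 0 * Complex.exp (-L 0) := hconst z 0
  rw [Complex.exp_add, sub_eq_add_neg, Complex.exp_add, Complex.exp_log (h0 0), ← h1,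
    mul_left_comm, ← Complex.exp_add, add_neg_cancel, Complex.exp_zero, mul_one]

open Complex in
/-- With `s` a square root of `f² - 1`, the functions `f + s` and `f - s` are inverse to each other;
writing `f + s = exp (i π F)` gives `f = cos (π F)`. -/
theorem exists_eq_cos_pi_mul {f : ℂ → ℂ} (hf : Differentiable ℂ f) (h1 : ∀ z, f z ≠ 1)
    (h2 : ∀ z, f z ≠ -1) :
    ∃ F : ℂ → ℂ, Differentiable ℂ F ∧ ∀ z, f z = cos (Real.pi * F z) := by
  obtain ⟨h, hh, hhe⟩ := exists_eq_exp (f := fun z => (f z - 1) * (f z + 1))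
    ((hf.sub_const 1).mul (hf.add_const 1)) fun z =>
      mul_ne_zero (sub_ne_zero.2 (h1 z)) fun hz => h2 z (eq_neg_of_add_eq_zero_left hz)
  have hs : ∀ z, (f z + exp (h z / 2)) * (f z - exp (h z / 2)) = 1 := by
    intro z
    have h3 : exp (h z / 2) * exp (h z / 2) = (f z - 1) * (f z + 1) := by
      rw [← exp_add, add_halves, hhe z]
    linear_combination -h3
  obtain ⟨k, hk, hke⟩ := exists_eq_exp (f := fun z => f z + exp (h z / 2))
    (hf.add (hh.div_const 2).cexp) fun z => left_ne_zero_of_mul_eq_one (hs z)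
  have hpi : (Real.pi : ℂ) ≠ 0 := ofReal_ne_zero.2 Real.pi_ne_zero
  refine ⟨fun z => k z / (I * Real.pi), hk.div_const _, fun z => ?_⟩
  have h4 : Real.pi * (k z / (I * Real.pi)) * I = k z := by
    field_simp [I_ne_zero]
  have h5 : exp (-k z) = f z - exp (h z / 2) := by
    rw [exp_neg, ← hke z]
    exact inv_eq_of_mul_eq_one_right (hs z)
  rw [cos, neg_mul, h4, h5, ← hke z]
  ring

/-- `cosh (π y)` grows by at least `1` on unit intervals of the positive axis, so it takes an
integer value on each of these intervals. -/
theorem exists_cosh_pi_mul_eq_intCast {y : ℝ} (hy : 0 ≤ y) :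
    ∃ t ∈ Set.Icc y (y + 1), ∃ n : ℤ, Real.cosh (Real.pi * t) = n := by
  have hpi := Real.pi_gt_three
  have hgrow : Real.cosh (Real.pi * y) + 1 ≤ Real.cosh (Real.pi * (y + 1)) := by
    have hc : 2 ≤ Real.cosh Real.pi := by
      rw [Real.cosh_eq]
      linarith [Real.add_one_le_exp Real.pi, Real.exp_pos (-Real.pi)]
    have h1 := Real.one_le_cosh (Real.pi * y)
    have h2 : 0 ≤ Real.sinh (Real.pi * y) * Real.sinh Real.pi :=
      mul_nonneg (Real.sinh_nonneg_iff.2 (by positivity)) (Real.sinh_nonneg_iff.2 (by positivity))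
    rw [mul_add, mul_one, Real.cosh_add]
    nlinarith
  obtain ⟨t, ht, hte⟩ := intermediate_value_Icc (by linarith : y ≤ y + 1)
    (f := fun t => Real.cosh (Real.pi * t))
    (Real.continuous_cosh.comp (continuous_const.mul continuous_id)).continuousOn
    ⟨Int.le_ceil (Real.cosh (Real.pi * y)), ((Int.ceil_lt_add_one _).le.trans hgrow)⟩
  exact ⟨t, ht, _, hte⟩

/-- The points `p = 2 k + i t` with `cosh (π t)` an integer form a `2`-net of the plane. -/
theorem exists_cos_pi_mul_eq_intCast (w : ℂ) :
    ∃ p : ℂ, ‖p - w‖ ≤ 2 ∧ ∃ n : ℤ, Complex.cos (Real.pi * p) = n := by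
  obtain ⟨t, ht, n, hn⟩ : ∃ t : ℝ, |t - w.im| ≤ 1 ∧
      ∃ n : ℤ, Real.cosh (Real.pi * t) = n := by
    rcases le_total 0 w.im with h | h
    · obtain ⟨t, ⟨h1, h2⟩, n, hn⟩ := exists_cosh_pi_mul_eq_intCast h
      exact ⟨t, abs_le.2 ⟨by linarith, by linarith⟩, n, hn⟩
    · obtain ⟨t, ⟨h1, h2⟩, n, hn⟩ := exists_cosh_pi_mul_eq_intCast (neg_nonneg.2 h)
      exact ⟨-t, abs_le.2 ⟨by linarith, by linarith⟩, n, by rwa [mul_neg, Real.cosh_neg]⟩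
  refine ⟨((2 * round (w.re / 2) : ℝ) : ℂ) + t * Complex.I, ?_, n, ?_⟩
  · refine (Complex.norm_le_abs_re_add_abs_im _).trans ?_
    have h1 := abs_le.1 (abs_sub_round (w.re / 2))
    have h2 : |2 * (round (w.re / 2) : ℝ) - w.re| ≤ 1 :=
      abs_le.2 ⟨by linarith, by linarith⟩
    simp only [Complex.sub_re, Complex.sub_im, Complex.add_re, Complex.add_im,
      Complex.ofReal_re, Complex.ofReal_im, Complex.re_ofReal_mul, Complex.im_ofReal_mul,
      Complex.I_re, Complex.I_im, mul_zero, mul_one, add_zero, zero_add]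
    linarith
  · have e : (Real.pi : ℂ) * (((2 * round (w.re / 2) : ℝ) : ℂ) + t * Complex.I) =
        ((Real.pi * t : ℝ) : ℂ) * Complex.I + (round (w.re / 2) : ℤ) * (2 * Real.pi) := by
      push_cast
      ring
    rw [e, Complex.cos_add_int_mul_two_pi, Complex.cos_mul_I, ← Complex.ofReal_cosh, hn]
    simp

open Complex in
theorem eq_const_of_ne_one_of_ne_neg_one {f : ℂ → ℂ} (hf : Differentiable ℂ f)
    (h1 : ∀ z, f z ≠ 1) (h2 : ∀ z, f z ≠ -1) : ∃ c, ∀ z, f z = c := by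
  obtain ⟨F, hF, hfF⟩ := exists_eq_cos_pi_mul hf h1 h2
  have hint : ∀ z (n : ℤ), F z ≠ n := by
    intro z n hn
    have h3 : f z = (((-1) ^ n : ℝ) : ℂ) := by
      rw [hfF z, hn, ← Real.cos_int_mul_pi, mul_comm]
      push_cast
      rfl
    rcases Int.even_or_odd n with h | h
    · exact h1 z (by rw [h3, h.neg_one_zpow, ofReal_one])
    · exact h2 z (by rw [h3, h.neg_one_zpow, ofReal_neg, ofReal_one])
  obtain ⟨g, hg, hFg⟩ := exists_eq_cos_pi_mul hF (fun z => by simpa using hint z 1)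
    (fun z => by simpa using hint z (-1))
  have hderiv : ∀ z, deriv g z = 0 := by
    by_contra! ⟨z, hz⟩
    obtain ⟨w, hw⟩ := exists_ball_subset_range hg hz (by norm_num : (0 : ℝ) < 3)
    obtain ⟨p, hp, n, hn⟩ := exists_cos_pi_mul_eq_intCast w
    obtain ⟨u, rfl⟩ := hw (Metric.mem_ball.2 (by rw [dist_eq_norm]; linarith) : p ∈ _)
    exact hint u n (by rw [hFg u, hn])
  refine ⟨f 0, fun z => ?_⟩
  rw [hfF z, hfF 0, hFg z, hFg 0, is_const_of_deriv_eq_zero hg hderiv z 0]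

/-- **Picard's Little Theorem.** Every entire function on the complex plane that
omits two distinct complex values is constant. -/
theorem picard_little_theorem (f : ℂ → ℂ) (hf : Differentiable ℂ f)
    (a b : ℂ) (hab : a ≠ b)
    (ha : ∀ z : ℂ, f z ≠ a) (hb : ∀ z : ℂ, f z ≠ b) :
    ∃ c : ℂ, ∀ z : ℂ, f z = c := by
  have hba : b - a ≠ 0 := sub_ne_zero.2 hab.symm
  -- The affine map `w ↦ (2 w - a - b) / (b - a)` sends `a` to `-1` and `b` to `1`.
  obtain ⟨c, hc⟩ := eq_const_of_ne_one_of_ne_neg_one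
    (f := fun z => (2 * f z - a - b) / (b - a))
    ((((hf.const_mul 2).sub_const a).sub_const b).div_const _)
    (fun z h => hb z (by rw [div_eq_iff hba] at h; linear_combination h / 2))
    (fun z h => ha z (by rw [div_eq_iff hba] at h; linear_combination h / 2))
  refine ⟨(c * (b - a) + a + b) / 2, fun z => ?_⟩
  have h := hc z
  rw [div_eq_iff hba] at h
  linear_combination h / 2
end

section
/- Let u₀, u₁ : ℂ → ℝ be harmonic functions on the whole plane and c ≥ 0 a constant such that |u₀⁺(z) − u₁⁺(z)| ≤ c and max(u₀(z), u₁(z)) ≥ −c for every z ∈ ℂ, where u⁺ = max(u,0). Then u₀ and u₁ are both constant. -/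
/-!
The proof is the rescaling argument behind the potential-theoretic proof of Picard's little theorem.

Write `u₀ = Re F₀`, `u₁ = Re F₁` with `F₀`, `F₁` entire and suppose that `u₀` is not constant. By
Liouville's theorem `u₀` has a zero and is unbounded above. `exists_zoom` finds discs `D(z, r)`,
centred at zeros of `u₀`, on which the maximum `M` of `u₀` is as large as desired, while
`u₀ ≤ C M` on `D(z, 5r)` with an absolute constant `C`. Such a disc is obtained by
maximising `u₀(w)` over all pairs `(z, w)` with `u₀(z) = 0` and `w` in the disc centred at `z` whose
radius is a fixed fraction of the distance from `z` to a large circle. Near zeros in `D(z, 6r)` the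
maximality bounds `u₀`; away from them `u₀` has a sign and Harnack's inequality applies.

Dividing by `M` and rescaling `D(z, r)` to the unit disc gives holomorphic functions whose real
parts satisfy the hypotheses with `c / M` instead of `c`. They are uniformly bounded by the
Borel–Carathéodory theorem, so they have limits `f`, `g` (`exists_ultralimit`) for which
`u = Re f`, `v = Re g` satisfy `u⁺ = v⁺` and `max(u, v) ≥ 0`, with `u(0) = 0` and `u(w) = 1` for
some `|w| ≤ 1`. Then `u = v` near `w`, so `u = v` everywhere, hence `u ≥ 0`. As `u(0) = 0`, the
maximum principle forces `u = 0`, a contradiction.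
-/

/-- The Laplacian `∂²u/∂x² + ∂²u/∂y²` of a function `u : ℂ → ℝ`,
under the identification `ℂ ≅ ℝ²`. -/
noncomputable def laplacian (u : ℂ → ℝ) (z : ℂ) : ℝ :=
  fderiv ℝ (fun w => fderiv ℝ u w 1) z 1 +
    fderiv ℝ (fun w => fderiv ℝ u w Complex.I) z Complex.I

/-- `u` is harmonic on the open set `U ⊆ ℂ`: it is twice continuously
differentiable on `U` and its Laplacian vanishes identically on `U`. -/
def IsHarmonicOn (u : ℂ → ℝ) (U : Set ℂ) : Prop :=
  ContDiffOn ℝ 2 u U ∧ ∀ z ∈ U, laplacian u z = 0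

open Metric Filter Topology Set

/-! ### Harnack and Liouville estimates -/

/-- Borel–Carathéodory on a disc with arbitrary centre. -/
lemma norm_sub_le_of_re_le {F : ℂ → ℂ} {p z : ℂ} {R A : ℝ} (hA : 0 < A)
    (hF : DifferentiableOn ℂ F (ball p R)) (hre : ∀ x ∈ ball p R, (F x).re - (F p).re ≤ A)
    (hz : z ∈ ball p R) : ‖F z - F p‖ ≤ 2 * A * ‖z - p‖ / (R - ‖z - p‖) := by
  have hR : 0 < R := pos_of_mem_ball hz
  have hmap : ∀ x ∈ ball (0 : ℂ) R, p + x ∈ ball p R := fun x hx => by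
    simpa [dist_eq_norm] using hx
  have hd : DifferentiableOn ℂ (fun x => F (p + x) - F p) (ball 0 R) :=
    (hF.comp (by fun_prop) hmap).sub_const _
  have := Complex.borelCaratheodory_zero (z := z - p) hA hd
    (fun x hx => by simpa using hre _ (hmap x hx)) hR
    (by simpa [dist_eq_norm] using hz) (by simp)
  simpa using this

/-- A form of Harnack's inequality. -/
lemma re_le_two_mul_re {F : ℂ → ℂ} {p q : ℂ} {ρ : ℝ} (hρ : 0 < ρ)
    (hF : DifferentiableOn ℂ F (ball p ρ)) (hpos : ∀ x ∈ ball p ρ, 0 < (F x).re)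
    (hq : ‖q - p‖ ≤ ρ / 5) : (F p).re ≤ 2 * (F q).re := by
  have hp := hpos p (mem_ball_self hρ)
  have hqm : q ∈ ball p ρ := by
    rw [mem_ball, dist_eq_norm]; linarith
  have h := norm_sub_le_of_re_le (F := fun x => -F x) hp hF.neg
    (fun x hx => by have := hpos x hx; simp only [Complex.neg_re]; linarith) hqm
  have h2 : 2 * (F p).re * ‖q - p‖ / (ρ - ‖q - p‖) ≤ (F p).re / 2 := by
    rw [div_le_iff₀ (by linarith)]
    nlinarith
  have h3 := (Complex.re_le_norm _).trans (h.trans h2)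
  simp only [Complex.sub_re, Complex.neg_re] at h3
  linarith

/-- One-sided Liouville theorem for the real part of an entire function. -/
lemma re_const_of_re_le {F : ℂ → ℂ} (hF : Differentiable ℂ F) {B : ℝ}
    (hB : ∀ z, (F z).re ≤ B) (z w : ℂ) : (F z).re = (F w).re := by
  have h := (Complex.differentiable_exp.comp hF).apply_eq_apply_of_bounded (by
    rw [isBounded_iff_forall_norm_le]
    refine ⟨Real.exp B, ?_⟩
    rintro _ ⟨x, rfl⟩
    simpa [Complex.norm_exp] using hB x) z w
  simpa [Complex.norm_exp] using congrArg norm h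

/-! ### Zooming discs -/

/-- A non-constant `u = Re F` with `F` entire has arbitrarily high zooming discs: they are
centred at zeros of `u`, and passing to the five times larger concentric disc increases the
maximum of `u` by at most an absolute factor. -/
lemma exists_zoom {F : ℂ → ℂ} (hF : Differentiable ℂ F)
    (hne : ¬ ∃ a : ℝ, ∀ z, (F z).re = a) (k : ℝ) :
    ∃ (z₀ w₀ : ℂ) (r : ℝ), 0 < r ∧ (F z₀).re = 0 ∧ k < (F w₀).re ∧ ‖w₀ - z₀‖ ≤ r ∧
      ∀ w, ‖w - z₀‖ ≤ 5 * r → (F w).re ≤ 2 ^ 50 * (F w₀).re := by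
  have hc : Continuous fun z => (F z).re := Complex.continuous_re.comp hF.continuous
  have habove : ∀ B, ∃ z, B < (F z).re := by
    by_contra! h
    obtain ⟨B, hB⟩ := h
    exact hne ⟨(F 0).re, fun z => re_const_of_re_le hF hB z 0⟩
  have hbelow : ∃ z, (F z).re ≤ 0 := by
    by_contra! h
    refine hne ⟨(F 0).re, fun z => ?_⟩
    simpa using re_const_of_re_le hF.neg (B := 0) (fun z => by simpa using (h z).le) z 0
  obtain ⟨a, ha⟩ : (0 : ℝ) ∈ range fun z => (F z).re :=
    mem_range_of_exists_le_of_exists_ge hc hbelow ((habove 0).imp fun _ h => h.le)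
  simp only at ha
  obtain ⟨b, hb⟩ := habove (max k 0)
  set R : ℝ := 12 * ‖b - a‖ with hR
  have hR0 : 0 ≤ R := by positivity
  -- Pairs of a zero `z` and a point `w` of its disc of radius one twelfth of the distance
  -- from `z` to the circle of radius `R` about `a`.
  set K : Set (ℂ × ℂ) := {q | (F q.1).re = 0 ∧ ‖q.1 - a‖ ≤ R ∧ 12 * ‖q.2 - q.1‖ ≤ R - ‖q.1 - a‖}
    with hK
  have hKc : IsCompact K := by
    refine ((isCompact_closedBall a R).prod (isCompact_closedBall a (2 * R))).of_isClosed_subset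
      ?_ ?_
    · have h1 : IsClosed {q : ℂ × ℂ | (F q.1).re = 0} :=
        isClosed_eq (hc.comp continuous_fst) continuous_const
      have h2 : IsClosed {q : ℂ × ℂ | ‖q.1 - a‖ ≤ R} := isClosed_le (by fun_prop) (by fun_prop)
      have h3 : IsClosed {q : ℂ × ℂ | 12 * ‖q.2 - q.1‖ ≤ R - ‖q.1 - a‖} :=
        isClosed_le (by fun_prop) (by fun_prop)
      exact h1.inter (h2.inter h3)
    · rintro ⟨z, w⟩ ⟨-, h1, h2⟩
      simp only at h1 h2
      refine ⟨by simpa [dist_eq_norm] using h1, ?_⟩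
      simp only [mem_closedBall, dist_eq_norm]
      have := norm_sub_le_norm_sub_add_norm_sub w z a
      have := norm_nonneg (w - z)
      linarith [norm_nonneg (z - a)]
  have hKb : (a, b) ∈ K := ⟨ha, by simpa using hR0, by simp [hR]⟩
  obtain ⟨⟨z₀, w₀⟩, ⟨hz₀, hz₀R, hw₀⟩, hmax⟩ :=
    hKc.exists_isMaxOn ⟨_, hKb⟩ (hc.comp continuous_snd).continuousOn
  simp only at hz₀ hz₀R hw₀
  have hmax' : ∀ z w, (z, w) ∈ K → (F w).re ≤ (F w₀).re := fun z w h => hmax h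
  have hM := hmax' _ _ hKb
  have hM0 : 0 < (F w₀).re := lt_of_lt_of_le (lt_of_le_of_lt (le_max_right _ _) hb) hM
  obtain ⟨r, hr⟩ : ∃ r, r = (R - ‖z₀ - a‖) / 12 := ⟨_, rfl⟩
  have hr0 : 0 < r := by
    rcases (norm_nonneg (w₀ - z₀)).eq_or_lt with h | h
    · have : w₀ = z₀ := by simpa [sub_eq_zero] using h.symm
      rw [this, hz₀] at hM0
      exact absurd hM0 (lt_irrefl _)
    · linarith
  refine ⟨z₀, w₀, r, hr0, hz₀, lt_of_lt_of_le (lt_of_le_of_lt (le_max_left _ _) hb) hM,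
    by linarith, ?_⟩
  -- Harnack chain from `w` to `z₀` in `n` steps of length at most `r / 10`.
  have key : ∀ (n : ℕ) (w : ℂ), ‖w - z₀‖ ≤ 5 * r → ‖w - z₀‖ ≤ n * (r / 10) →
      (F w).re ≤ 2 ^ n * (F w₀).re := by
    intro n
    induction n with
    | zero =>
      intro w _ hw
      have : w = z₀ := by
        have : ‖w - z₀‖ ≤ 0 := by simpa using hw
        simpa [sub_eq_zero] using this
      rw [this, hz₀]
      simpa using hM0.le
    | succ n ih =>
      intro w hw5 hwn
      have hpow : (1 : ℝ) ≤ 2 ^ (n + 1) := one_le_pow₀ (by norm_num)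
      by_cases hw0 : (F w).re ≤ 0
      · exact hw0.trans (by positivity)
      by_cases hzero : ∃ p ∈ ball w (r / 2), (F p).re = 0
      · obtain ⟨p, hp, hp0⟩ := hzero
        rw [mem_ball, dist_eq_norm] at hp
        have h1 := norm_sub_le_norm_sub_add_norm_sub p w z₀
        have h2 := norm_sub_le_norm_sub_add_norm_sub p z₀ a
        have : (F w).re ≤ (F w₀).re :=
          hmax' p w ⟨hp0, by simp only; linarith, by simp only; rw [norm_sub_rev w p]; linarith⟩
        nlinarith
      · push Not at hzero
        have hpos : ∀ x ∈ ball w (r / 2), 0 < (F x).re := by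
          intro x hx
          by_contra! hx0
          obtain ⟨p, hp, hp0⟩ := (convex_ball w (r / 2)).isPreconnected.intermediate_value hx
            (mem_ball_self (by linarith)) hc.continuousOn ⟨hx0, (not_le.1 hw0).le⟩
          exact hzero p hp hp0
        have hn : (0 : ℝ) < n + 1 := by positivity
        set q : ℂ := z₀ + ((n / (n + 1) : ℝ) : ℂ) * (w - z₀) with hq
        have hq1 : ‖q - z₀‖ = n / (n + 1) * ‖w - z₀‖ := by
          rw [hq, add_sub_cancel_left, norm_mul, Complex.norm_real, Real.norm_eq_abs,
            abs_of_nonneg (by positivity)]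
        have hq2 : ‖q - w‖ = 1 / (n + 1) * ‖w - z₀‖ := by
          have : q - w = ((-(1 / (n + 1)) : ℝ) : ℂ) * (w - z₀) := by
            have : (n / (n + 1) : ℝ) = 1 + (-(1 / (n + 1))) := by field_simp; ring
            rw [hq, this]; push_cast; ring
          rw [this, norm_mul, Complex.norm_real, Real.norm_eq_abs, abs_neg,
            abs_of_nonneg (by positivity)]
        push_cast at hwn
        have hqn : ‖q - z₀‖ ≤ n * (r / 10) := by
          rw [hq1]
          calc n / (n + 1) * ‖w - z₀‖ ≤ n / (n + 1) * ((n + 1) * (r / 10)) := by gcongr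
            _ = n * (r / 10) := by field_simp
        have hq5 : ‖q - z₀‖ ≤ 5 * r := by
          rw [hq1]
          refine le_trans (mul_le_of_le_one_left (norm_nonneg _) ?_) hw5
          rw [div_le_one hn]; linarith
        have hqw : ‖q - w‖ ≤ r / 2 / 5 := by
          rw [hq2]
          calc 1 / (n + 1) * ‖w - z₀‖ ≤ 1 / (n + 1) * ((n + 1) * (r / 10)) := by gcongr
            _ = r / 2 / 5 := by field_simp; norm_num
        have := re_le_two_mul_re (by linarith) hF.differentiableOn hpos hqw
        have := ih q hq5 hqn
        rw [pow_succ]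
        linarith
  intro w hw
  refine key 50 w hw ?_
  push_cast
  linarith

/-! ### Normal families and the limit pair -/

/-- Montel's theorem, with an ultrafilter in place of a subsequence. -/
lemma exists_ultralimit (U : Ultrafilter ℕ) {f : ℕ → ℂ → ℂ} {B : ℝ}
    (hd : ∀ n, DifferentiableOn ℂ (f n) (ball 0 3)) (hb : ∀ n, ∀ z ∈ ball (0 : ℂ) 3, ‖f n z‖ ≤ B) :
    ∃ g : ℂ → ℂ, DifferentiableOn ℂ g (ball 0 2) ∧
      TendstoLocallyUniformlyOn f g U (ball 0 2) := by
  have hB : 0 ≤ B := (norm_nonneg _).trans (hb 0 0 (by simp))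
  have hlim : ∀ z : ℂ, ∃ y, z ∈ ball (0 : ℂ) 3 → Tendsto (fun n => f n z) U (𝓝 y) := by
    intro z
    by_cases hz : z ∈ ball (0 : ℂ) 3
    · obtain ⟨y, -, hy⟩ := (isCompact_closedBall (0 : ℂ) B).ultrafilter_le_nhds
        (U.map fun n => f n z) (by
          rw [le_principal_iff]
          refine Ultrafilter.mem_map.2 (Filter.univ_mem' fun n => ?_)
          simpa using hb n z hz)
      exact ⟨y, fun _ => hy⟩
    · exact ⟨0, fun h => absurd h hz⟩
  choose g hg using hlim
  have hsub : ∀ x ∈ ball (0 : ℂ) 2, ball x 1 ⊆ ball 0 3 := fun x hx =>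
    ball_subset_ball' (by rw [mem_ball] at hx; linarith)
  have hLip : ∀ n, ∀ x ∈ ball (0 : ℂ) 2, ∀ y ∈ ball x 1,
      dist (f n y) (f n x) ≤ 2 * B * dist y x := by
    intro n x hx y hy
    have := Complex.dist_le_div_mul_dist_of_mapsTo_ball (R₂ := 2 * B)
      ((hd n).mono (hsub x hx)) (fun t ht => by
        rw [mem_closedBall, dist_eq_norm]
        have h1 := hb n t (hsub x hx ht)
        have h2 := hb n x (hsub x hx (mem_ball_self one_pos))
        linarith [norm_sub_le (f n t) (f n x)]) hy
    simpa using this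
  have hLip' : ∀ x ∈ ball (0 : ℂ) 2, ∀ y ∈ ball x 1, dist (g y) (g x) ≤ 2 * B * dist y x := by
    intro x hx y hy
    exact le_of_tendsto ((hg y (hsub x hx hy)).dist (hg x (hsub x hx (mem_ball_self one_pos))))
      (Eventually.of_forall fun n => hLip n x hx y hy)
  have hloc : TendstoLocallyUniformlyOn f g U (ball 0 2) := by
    rw [Metric.tendstoLocallyUniformlyOn_iff]
    intro ε hε x hx
    obtain ⟨δ, hδ0, hδ1, hδ⟩ : ∃ δ > 0, δ ≤ 1 ∧ 2 * B * δ ≤ ε / 3 := by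
      refine ⟨min 1 (ε / (6 * B + 1)), by positivity, min_le_left _ _, ?_⟩
      calc 2 * B * min 1 (ε / (6 * B + 1)) ≤ 2 * B * (ε / (6 * B + 1)) := by
            gcongr; exact min_le_right _ _
        _ ≤ ε / 3 := by
            rw [mul_div_assoc', div_le_iff₀ (by positivity)]
            nlinarith
    refine ⟨ball x δ, mem_nhdsWithin_of_mem_nhds (ball_mem_nhds x hδ0), ?_⟩
    have hx' := Metric.tendsto_nhds.1 (hg x (hsub x hx (mem_ball_self one_pos))) (ε / 3)
      (by positivity)
    filter_upwards [hx'] with n hn y hy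
    have hy1 : y ∈ ball x 1 := ball_subset_ball hδ1 hy
    have hyd : 2 * B * dist y x ≤ ε / 3 := by
      refine le_trans ?_ hδ
      have := (mem_ball.1 hy).le
      gcongr
    have h1 := hLip n x hx y hy1
    have h2 := hLip' x hx y hy1
    have h3 := dist_triangle4 (g y) (g x) (f n x) (f n y)
    rw [dist_comm (g x), dist_comm (f n x) (f n y)] at h3
    linarith
  exact ⟨g, hloc.differentiableOn
    (Eventually.of_forall fun n => (hd n).mono (ball_subset_ball (by norm_num))) isOpen_ball, hloc⟩

/-- If `Re f ≤ 0` on a preconnected open set, with equality at one point, then `Re f` vanishes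
identically. -/
lemma re_eq_zero_of_re_le {f : ℂ → ℂ} {V : Set ℂ} (hV : IsPreconnected V) (hVo : IsOpen V)
    (hf : DifferentiableOn ℂ f V) {p : ℂ} (hp : p ∈ V) (hle : ∀ z ∈ V, (f z).re ≤ 0)
    (hp0 : (f p).re = 0) {z : ℂ} (hz : z ∈ V) : (f z).re = 0 := by
  have h := Complex.norm_eqOn_of_isPreconnected_of_isMaxOn (f := fun z => Complex.exp (f z))
    hV hVo hf.cexp hp (fun x hx => by simpa [Complex.norm_exp, hp0] using hle x hx) hz
  simpa [Complex.norm_exp, hp0] using h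

/-- If `Re f` vanishes near a point of a preconnected open set on which `f` is holomorphic,
it vanishes identically. -/
lemma re_eq_zero_of_eventually {f : ℂ → ℂ} {V : Set ℂ} (hV : IsPreconnected V) (hVo : IsOpen V)
    (hf : DifferentiableOn ℂ f V) {p : ℂ} (hp : p ∈ V) (hev : ∀ᶠ z in 𝓝 p, (f z).re = 0)
    {z : ℂ} (hz : z ∈ V) : (f z).re = 0 := by
  have hfe : DifferentiableOn ℂ (fun z => Complex.exp (f z)) V := hf.cexp
  have hp0 := hev.self_of_nhds
  have hc := Complex.eventually_eq_of_isLocalMax_norm (f := fun z => Complex.exp (f z)) (c := p)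
    ((hVo.eventually_mem hp).mono fun x hx => hfe.differentiableAt (hVo.mem_nhds hx))
    (hev.mono fun x hx => by simp [Complex.norm_exp, hx, hp0])
  have h := (hfe.analyticOnNhd hVo).eqOn_of_preconnected_of_eventuallyEq
    (analyticOnNhd_const (v := Complex.exp (f p))) hV hp hc hz
  simpa [Complex.norm_exp, hp0] using congrArg norm h

/-- The contradiction in the limit: normalised holomorphic pairs cannot satisfy the two
inequalities with constants tending to `0`. -/
lemma no_normalised_pairs {f g : ℕ → ℂ → ℂ} {ε : ℕ → ℝ} {w : ℕ → ℂ} {B : ℝ}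
    (hε : Tendsto ε atTop (𝓝 0))
    (hfd : ∀ n, DifferentiableOn ℂ (f n) (ball 0 3)) (hgd : ∀ n, DifferentiableOn ℂ (g n) (ball 0 3))
    (hfb : ∀ n, ∀ z ∈ ball (0 : ℂ) 3, ‖f n z‖ ≤ B) (hgb : ∀ n, ∀ z ∈ ball (0 : ℂ) 3, ‖g n z‖ ≤ B)
    (hf0 : ∀ n, (f n 0).re = 0) (hw : ∀ n, ‖w n‖ ≤ 1) (hfw : ∀ n, (f n (w n)).re = 1)
    (hdiff : ∀ n z, |max (f n z).re 0 - max (g n z).re 0| ≤ ε n)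
    (hmax : ∀ n z, -ε n ≤ max (f n z).re (g n z).re) : False := by
  let U : Ultrafilter ℕ := Ultrafilter.of atTop
  have hεU : Tendsto ε U (𝓝 0) := hε.mono_left (Ultrafilter.of_le _)
  obtain ⟨F, hFd, hF⟩ := exists_ultralimit U hfd hfb
  obtain ⟨G, hGd, hG⟩ := exists_ultralimit U hgd hgb
  have hFp : ∀ z ∈ ball (0 : ℂ) 2, Tendsto (fun n => (f n z).re) U (𝓝 (F z).re) := fun z hz =>
    (Complex.continuous_re.tendsto _).comp (hF.tendsto_at hz)
  have hGp : ∀ z ∈ ball (0 : ℂ) 2, Tendsto (fun n => (g n z).re) U (𝓝 (G z).re) := fun z hz =>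
    (Complex.continuous_re.tendsto _).comp (hG.tendsto_at hz)
  have h00 : (0 : ℂ) ∈ ball (0 : ℂ) 2 := by simp
  have hF0 : (F 0).re = 0 := by
    refine tendsto_nhds_unique (hFp 0 h00) ?_
    simp [hf0]
  have hFG : ∀ z ∈ ball (0 : ℂ) 2, max (F z).re 0 = max (G z).re 0 := by
    intro z hz
    have := le_of_tendsto_of_tendsto' ((((hFp z hz).max tendsto_const_nhds).sub
      ((hGp z hz).max tendsto_const_nhds)).abs) hεU (fun n => hdiff n z)
    exact sub_eq_zero.1 (abs_nonpos_iff.1 this)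
  have hFGmax : ∀ z ∈ ball (0 : ℂ) 2, 0 ≤ max (F z).re (G z).re := by
    intro z hz
    have := le_of_tendsto_of_tendsto' hεU.neg ((hFp z hz).max (hGp z hz)) (fun n => hmax n z)
    simpa using this
  obtain ⟨p, hp1, hp⟩ := (isCompact_closedBall (0 : ℂ) 1).ultrafilter_le_nhds (U.map w) (by
    rw [le_principal_iff]
    refine Ultrafilter.mem_map.2 (Filter.univ_mem' fun n => ?_)
    simpa using hw n)
  have hp2 : p ∈ ball (0 : ℂ) 2 := closedBall_subset_ball (by norm_num) hp1
  have hnhds : ball (0 : ℂ) 2 ∈ 𝓝 p := isOpen_ball.mem_nhds hp2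
  have hFp1 : (F p).re = 1 := by
    have h1 : Tendsto (fun n => f n (w n)) U (𝓝 (F p)) := by
      refine hF.tendsto_comp (hFd.continuousOn p hp2) hp2 ?_
      rw [nhdsWithin_eq_nhds.2 hnhds]
      exact hp
    refine tendsto_nhds_unique ((Complex.continuous_re.tendsto _).comp h1) ?_
    simp [Function.comp_def, hfw]
  have hconn : IsPreconnected (ball (0 : ℂ) 2) := (convex_ball _ _).isPreconnected
  have hev : ∀ᶠ z in 𝓝 p, ((fun z => F z - G z) z).re = 0 := by
    have hcont : ContinuousAt (fun z => (F z).re) p :=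
      Complex.continuous_re.continuousAt.comp (hFd.continuousOn.continuousAt hnhds)
    have hpos : ∀ᶠ z in 𝓝 p, 0 < (F z).re := hcont.eventually (lt_mem_nhds (by simp [hFp1]))
    filter_upwards [hpos, hnhds] with z hz hz2
    have := hFG z hz2
    rw [max_eq_left hz.le] at this
    rcases max_choice (G z).re 0 with h | h <;> rw [h] at this
    · simp [this]
    · exact absurd this hz.ne'
  have heq : ∀ z ∈ ball (0 : ℂ) 2, (F z).re = (G z).re := fun z hz => by
    have := re_eq_zero_of_eventually hconn isOpen_ball (hFd.fun_sub hGd) hp2 hev hz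
    simpa [sub_eq_zero] using this
  have := re_eq_zero_of_re_le hconn isOpen_ball hFd.fun_neg h00
    (fun z hz => by simpa [← heq z hz] using hFGmax z hz) (by simpa using hF0) hp2
  simp [hFp1] at this

/-! ### Rescaling -/

/-- One rescaled pair, built from a zooming disc of `Re F` of height at least `n + 1`. -/
lemma exists_rescaled {F G : ℂ → ℂ} (hF : Differentiable ℂ F) (hG : Differentiable ℂ G) {c : ℝ}
    (hc : 0 ≤ c) (hne : ¬ ∃ a : ℝ, ∀ z, (F z).re = a)
    (hdiff : ∀ z, |max (F z).re 0 - max (G z).re 0| ≤ c)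
    (hmax : ∀ z, -c ≤ max (F z).re (G z).re) (n : ℕ) :
    ∃ (f g : ℂ → ℂ) (w : ℂ), Differentiable ℂ f ∧ Differentiable ℂ g ∧
      (∀ z ∈ ball (0 : ℂ) 3, ‖f z‖ ≤ 7 * 2 ^ 50 + 14) ∧
      (∀ z ∈ ball (0 : ℂ) 3, ‖g z‖ ≤ 7 * 2 ^ 50 + 14) ∧
      (f 0).re = 0 ∧ ‖w‖ ≤ 1 ∧ (f w).re = 1 ∧
      (∀ z, |max (f z).re 0 - max (g z).re 0| ≤ c / (n + 1)) ∧
      (∀ z, -(c / (n + 1)) ≤ max (f z).re (g z).re) := by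
  obtain ⟨z₀, w₀, r, hr, hz₀, hk, hw₀, hbd⟩ := exists_zoom hF hne (n + 1 + c)
  obtain ⟨M, hM⟩ : ∃ M, M = (F w₀).re := ⟨_, rfl⟩
  obtain ⟨C, hC⟩ : ∃ C : ℝ, C = 2 ^ 50 := ⟨_, rfl⟩
  rw [← hM] at hk
  rw [← hM, ← hC] at hbd
  rw [← hC]
  have hC0 : 0 < C := by rw [hC]; positivity
  have hn : (0 : ℝ) < n + 1 := by positivity
  have hM0 : 0 < M := by linarith
  have hcM : c ≤ M := by linarith
  -- Borel–Carathéodory on `D(z₀, 5r)`, evaluated on `D(z₀, 3r)`.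
  have hBC : ∀ {H : ℂ → ℂ} {A : ℝ}, Differentiable ℂ H → 0 < A →
      (∀ x ∈ ball z₀ (5 * r), (H x).re - (H z₀).re ≤ A) →
      ∀ z ∈ ball (0 : ℂ) 3, ‖H (z₀ + r * z) - H z₀‖ ≤ 3 * A := by
    intro H A hH hA hre z hz
    have hz3 : ‖z‖ < 3 := by simpa using hz
    have hnorm : ‖z₀ + r * z - z₀‖ = r * ‖z‖ := by
      rw [add_sub_cancel_left, norm_mul, Complex.norm_real, Real.norm_eq_abs, abs_of_pos hr]
    have hlt : r * ‖z‖ < r * 3 := by gcongr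
    refine (norm_sub_le_of_re_le hA hH.differentiableOn hre ?_).trans ?_
    · rw [mem_ball, dist_eq_norm, hnorm]; linarith
    · rw [hnorm, div_le_iff₀ (by linarith)]
      nlinarith
  have hball : ∀ x ∈ ball z₀ (5 * r), (F x).re ≤ C * M := fun x hx =>
    hbd x (by rw [mem_ball, dist_eq_norm] at hx; exact hx.le)
  have hGub : ∀ x ∈ ball z₀ (5 * r), (G x).re ≤ (C + 1) * M := by
    intro x hx
    have h1 := (abs_le.1 (hdiff x)).1
    have h2 : max (F x).re 0 ≤ C * M := max_le (hball x hx) (by positivity)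
    have h3 := le_max_left (G x).re 0
    linarith
  have hGw : 0 ≤ (G w₀).re := by
    have h1 := (abs_le.1 (hdiff w₀)).2
    rw [← hM, max_eq_left hM0.le] at h1
    by_contra! h
    rw [max_eq_right h.le] at h1
    linarith
  -- Harnack's inequality for the positive function `(C + 2) M - Re G`.
  have hGlb : -((C + 2) * M) ≤ (G z₀).re := by
    have := re_le_two_mul_re (F := fun z => (((C + 2) * M : ℝ) : ℂ) - G z) (p := z₀) (q := w₀)
      (ρ := 5 * r) (by positivity) (hG.const_sub _).differentiableOn
      (fun x hx => by
        have := hGub x hx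
        rw [Complex.sub_re, Complex.ofReal_re]
        linarith) (by linarith)
    simp only [Complex.sub_re, Complex.ofReal_re] at this
    linarith
  have hGz₀ := hGub z₀ (mem_ball_self (by positivity))
  have hMc : (M : ℂ) ≠ 0 := by exact_mod_cast hM0.ne'
  have hmaxdiv : ∀ x y : ℝ, max (x / M) (y / M) = max x y / M := fun x y =>
    max_div_div_right hM0.le x y
  have hcn : c / M ≤ c / (n + 1) := by gcongr; linarith
  have hfre : ∀ z, ((F (z₀ + r * z) - F z₀) / M).re = (F (z₀ + r * z)).re / M := fun z => by
    rw [Complex.div_ofReal_re, Complex.sub_re, hz₀, sub_zero]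
  have hgre : ∀ z, ((G (z₀ + r * z) - (G z₀).im * Complex.I) / M).re =
      (G (z₀ + r * z)).re / M := fun z => by
    rw [Complex.div_ofReal_re]; simp
  refine ⟨fun z => (F (z₀ + r * z) - F z₀) / M,
    fun z => (G (z₀ + r * z) - (G z₀).im * Complex.I) / M, (w₀ - z₀) / r, by fun_prop, by fun_prop,
    ?_, ?_, ?_, ?_, ?_, ?_, ?_⟩
  · intro z hz
    have := hBC hF (A := C * M) (by positivity) (fun x hx => by
      have := hball x hx
      linarith) z hz
    rw [norm_div, Complex.norm_real, Real.norm_eq_abs, abs_of_pos hM0, div_le_iff₀ hM0]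
    nlinarith
  · intro z hz
    have h1 := hBC hG (A := (2 * C + 4) * M) (by positivity) (fun x hx => by
      have := hGub x hx
      linarith) z hz
    have h2 : ‖(((G z₀).re : ℝ) : ℂ)‖ ≤ (C + 2) * M := by
      rw [Complex.norm_real, Real.norm_eq_abs, abs_le]
      exact ⟨hGlb, by linarith⟩
    have h3 : G (z₀ + r * z) - (G z₀).im * Complex.I =
        (G (z₀ + r * z) - G z₀) + ((G z₀).re : ℝ) := by
      linear_combination -Complex.re_add_im (G z₀)
    rw [norm_div, Complex.norm_real, Real.norm_eq_abs, abs_of_pos hM0, div_le_iff₀ hM0, h3]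
    have := norm_add_le (G (z₀ + r * z) - G z₀) (((G z₀).re : ℝ) : ℂ)
    nlinarith
  · simp
  · rw [norm_div, Complex.norm_real, Real.norm_eq_abs, abs_of_pos hr, div_le_one hr]
    exact hw₀
  · have hrc : (r : ℂ) ≠ 0 := by exact_mod_cast hr.ne'
    rw [hfre, mul_div_cancel₀ _ hrc, add_sub_cancel, ← hM, div_self hM0.ne']
  · intro z
    simp only [hfre, hgre]
    have h0 : (0 : ℝ) = 0 / M := by simp
    rw [h0, hmaxdiv, hmaxdiv, ← sub_div, abs_div, abs_of_pos hM0]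
    refine le_trans ?_ hcn
    gcongr
    exact hdiff _
  · intro z
    simp only [hfre, hgre]
    rw [hmaxdiv]
    refine (neg_le_neg hcn).trans ?_
    rw [← neg_div]
    gcongr
    exact hmax _

lemma re_const_of_pair {F G : ℂ → ℂ} (hF : Differentiable ℂ F) (hG : Differentiable ℂ G) {c : ℝ}
    (hc : 0 ≤ c) (hdiff : ∀ z, |max (F z).re 0 - max (G z).re 0| ≤ c)
    (hmax : ∀ z, -c ≤ max (F z).re (G z).re) : ∃ a : ℝ, ∀ z, (F z).re = a := by
  by_contra hne
  choose f g w hf hg hfb hgb hf0 hw hfw hd hm using exists_rescaled hF hG hc hne hdiff hmax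
  have hε : Tendsto (fun n : ℕ => c / ((n : ℝ) + 1)) atTop (𝓝 0) := by
    simpa [div_eq_mul_inv] using tendsto_one_div_add_atTop_nhds_zero_nat.const_mul c
  exact no_normalised_pairs hε (fun n => (hf n).differentiableOn)
    (fun n => (hg n).differentiableOn) hfb hgb hf0 hw hfw hd hm

/-! ### Harmonic functions as real parts -/

/-- Comparison with Mathlib's notion of harmonicity yields a holomorphic function with real
part `u`. -/
lemma IsHarmonicOn.exists_re_eq {u : ℂ → ℝ} (h : IsHarmonicOn u univ) :
    ∃ F : ℂ → ℂ, Differentiable ℂ F ∧ ∀ z, (F z).re = u z := by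
  have hu : ContDiff ℝ 2 u := contDiffOn_univ.1 h.1
  have hfd : Differentiable ℝ (fderiv ℝ u) :=
    (hu.fderiv_right (m := 1) (by norm_num)).differentiable (by norm_num)
  have hdir : ∀ z v : ℂ, fderiv ℝ (fun w => fderiv ℝ u w v) z v =
      iteratedFDeriv ℝ 2 u z ![v, v] := by
    intro z v
    rw [iteratedFDeriv_two_apply, fderiv_clm_apply (hfd z) (by fun_prop)]
    simp
  have hharm : InnerProductSpace.HarmonicOnNhd u univ := by
    refine fun z _ => ⟨hu.contDiffAt, Eventually.of_forall fun x => ?_⟩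
    rw [InnerProductSpace.laplacian_eq_iteratedFDeriv_complexPlane]
    have := h.2 x (mem_univ x)
    rw [laplacian, hdir, hdir] at this
    simpa using this
  obtain ⟨F, hF, hre⟩ := hharm.exists_analyticOnNhd_univ_re_eq
  exact ⟨F, fun z => (hF z (mem_univ z)).differentiableAt, fun z => congrFun hre z⟩

/-- If `u₀, u₁` are harmonic in the whole plane, `c ≥ 0`, and
`|u₀⁺ − u₁⁺| ≤ c` and `max(u₀, u₁) ≥ −c` everywhere, then `u₀` and `u₁`
are both constant. -/
theorem harmonic_pair_constant (u₀ u₁ : ℂ → ℝ) (c : ℝ) (hc : 0 ≤ c)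
    (h₀ : IsHarmonicOn u₀ Set.univ) (h₁ : IsHarmonicOn u₁ Set.univ)
    (hdiff : ∀ z : ℂ, |max (u₀ z) 0 - max (u₁ z) 0| ≤ c)
    (hmax : ∀ z : ℂ, -c ≤ max (u₀ z) (u₁ z)) :
    (∃ a : ℝ, ∀ z : ℂ, u₀ z = a) ∧ (∃ b : ℝ, ∀ z : ℂ, u₁ z = b) := by
  obtain ⟨F₀, hF₀, hu₀⟩ := h₀.exists_re_eq
  obtain ⟨F₁, hF₁, hu₁⟩ := h₁.exists_re_eq
  simp only [← hu₀, ← hu₁] at *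
  refine ⟨re_const_of_pair hF₀ hF₁ hc hdiff hmax, re_const_of_pair hF₁ hF₀ hc (fun z => ?_)
    fun z => ?_⟩
  · rw [abs_sub_comm]; exact hdiff z
  · rw [max_comm]; exact hmax z
end

section
/- (Borel's theorem) Let f₁, …, f_p be entire functions, each of which has no zeros in ℂ, satisfying f₁ + f₂ + ⋯ + f_p = 0 identically. Then there is a partition of the index set {1, …, p} into classes I such that: for every class I and all i, j ∈ I the functions f_i and f_j are proportional (i.e., there is a nonzero constant c ∈ ℂ with f_i = c·f_j), and for every class I the sum Σ_{i∈I} f_i is identically zero. -/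
/-!
Borel's theorem is proved by separating growth from exponential behaviour, with the Nevanlinna
characteristic as the measure of growth.

*Slow functions.* Let `∑ j ∈ S, f j = 0`. Fix `k ∈ S`, write `f j = h j * f k` with
`h j = exp (g j)`, and put `T r = 1 + ∑ j ∈ S, characteristic (h j) ⊤ r`. An entire function is
called slow if on `‖z‖ ≤ r` it is bounded by a power of `R * T R / (R - r)`, for all `R > r`, up to
a constant. By Cauchy's estimate slow functions form a differential algebra `A`
(`Slow.deriv`, `slowAlgebra`). Poisson's formula followed by the Borel–Carathéodory inequality
bounds `g j` by `(R / (R - r)) ^ 2 * T R` (`norm_log_le`), so `g j` and its derivative are slow.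

*Elimination.* Each `h j` satisfies `deriv (h j) = deriv (g j) * h j` with coefficient in `A`. Call
`h i`, `h j` commensurable if `b * h i = c * h j` for nonzero `b, c ∈ A`. Eliminating one term at a
time with a Wronskian shows that a vanishing sum of the `h j` splits into vanishing sums over the
commensurability classes (`class_sum_eq_zero`).

*Growth.* If all `h j` are commensurable to `h k = 1`, then each `h j` is a quotient of two slow
functions, so `T r ≤ K * (1 + log (R * T R / (R - r)))`. Borel's growth lemma, with `R = r + 1 / T r`,
gives `T r = O(log r)` along a sequence (`gauge_le_log`), whence each `deriv (g j)` vanishes by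
Cauchy's estimate (`const_of_log_bound`), and the `h j` are constants. Thus either all `f j`,
`j ∈ S`, are proportional, or each `f i` lies, together with all `f j` proportional to it, in a
strictly shorter vanishing sum (`dichotomy`). Induction on `S` finishes the proof
(`proportional_sum_eq_zero`).
-/

namespace BorelAux

/-! ### Logarithms and the Nevanlinna characteristic of entire functions -/

section

open Complex Metric Set Filter Topology ValueDistribution Real

lemma exists_log {f : ℂ → ℂ} (hf : Differentiable ℂ f) (h0 : ∀ z, f z ≠ 0) :
    ∃ g : ℂ → ℂ, Differentiable ℂ g ∧ ∀ z, f z = Complex.exp (g z) := by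
  have hd : Differentiable ℂ (fun z => deriv f z / f z) := hf.deriv.div hf h0
  obtain ⟨g, hg0, hg⟩ := hd.isExactOn_univ.with_val_at 0 (Complex.log (f 0))
  have hgd : Differentiable ℂ g := fun z => (hg z (mem_univ z)).differentiableAt
  refine ⟨g, hgd, fun z => ?_⟩
  have hq : ∀ w, HasDerivAt (fun w => f w * Complex.exp (-g w)) 0 w := by
    intro w
    have := (hf w).hasDerivAt.mul ((hg w (mem_univ w)).neg.cexp)
    refine this.congr_deriv ?_
    have := h0 w
    field_simp
    ring
  have := is_const_of_deriv_eq_zero (fun w => (hq w).differentiableAt) (fun w => (hq w).deriv) z 0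
  simp only [hg0, Complex.exp_neg, Complex.exp_log (h0 0), mul_inv_cancel₀ (h0 0)] at this
  field_simp at this
  exact this

lemma mul_eq_zero_entire {f g : ℂ → ℂ} (hf : Differentiable ℂ f) (hg : Differentiable ℂ g)
    (h : f * g = 0) : f = 0 ∨ g = 0 := by
  have := AnalyticOnNhd.eq_zero_or_eq_zero_of_mul_eq_zero (U := univ)
    (fun z _ => hf.analyticAt z) (fun z _ => hg.analyticAt z) (fun z _ => congrFun h z)
    isPreconnected_univ
  simpa [funext_iff] using this

lemma meromorphic_of_entire {f : ℂ → ℂ} (hf : Differentiable ℂ f) : Meromorphic f :=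
  fun z => (hf.analyticAt z).meromorphicAt

lemma order_ne_top {f : ℂ → ℂ} (hf : Differentiable ℂ f) (h : f ≠ 0) (z : ℂ) :
    meromorphicOrderAt f z ≠ ⊤ := by
  intro ht
  rw [meromorphicOrderAt_eq_top_iff] at ht
  apply h
  have := AnalyticOnNhd.eqOn_zero_of_preconnected_of_frequently_eq_zero (U := univ)
    (fun z _ => hf.analyticAt z) isPreconnected_univ (mem_univ z) ht.frequently
  funext w
  exact this (mem_univ w)

lemma characteristic_entire_le {f : ℂ → ℂ} (hf : Differentiable ℂ f) {r M : ℝ}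
    (hr : 0 < r) (hM : ∀ z, ‖z‖ ≤ r → ‖f z‖ ≤ M) : characteristic f ⊤ r ≤ log⁺ M := by
  have h1 : logCounting f ⊤ = 0 := by
    have : 0 ≤ MeromorphicOn.divisor f univ :=
      MeromorphicOn.AnalyticOnNhd.divisor_nonneg (fun z _ => hf.analyticAt z)
    rw [logCounting_top, negPart_eq_zero.2 this, map_zero]
  -- No poles, so only the proximity term contributes.
  rw [characteristic, h1, add_zero, proximity_top]
  apply Real.circleAverage_mono_on_of_le_circle
  · exact (meromorphic_of_entire hf).meromorphicOn.circleIntegrable_posLog_norm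
  · intro x hx
    apply Real.posLog_le_posLog (norm_nonneg _) (hM x _)
    simpa [abs_of_pos hr] using (mem_sphere_iff_norm.1 hx).le

/-- The characteristic of a quotient `h = c / b` is controlled by those of `b` and `c`, by the first
main theorem of Nevanlinna theory. -/
lemma characteristic_quotient {b c h : ℂ → ℂ} (hb : Differentiable ℂ b) (hc : Differentiable ℂ c)
    (b0 : b ≠ 0) (c0 : c ≠ 0) (heq : b * h = c) :
    ∃ K : ℝ, ∀ r, 1 ≤ r →
      characteristic h ⊤ r ≤ characteristic b ⊤ r + characteristic c ⊤ r + K := by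
  refine ⟨-Real.log ‖meromorphicTrailingCoeffAt b 0‖, fun r hr => ?_⟩
  have hr0 : r ≠ 0 := by positivity
  -- `h` agrees with `c * b⁻¹` off the zeros of `b`, which the characteristic does not see.
  have h1 : characteristic h ⊤ r = characteristic (c * b⁻¹) ⊤ r := by
    apply characteristic_congr_codiscrete _ hr0
    obtain ⟨x, hx⟩ := Function.ne_iff.1 b0
    have : b ⁻¹' {0}ᶜ ∈ codiscrete ℂ :=
      AnalyticOnNhd.preimage_zero_mem_codiscrete (fun z _ => hb.analyticAt z) hx
    filter_upwards [this] with z hz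
    simp only [← heq, Pi.mul_apply, Pi.inv_apply]
    have : b z ≠ 0 := hz
    field_simp
  have h2 := characteristic_mul_top_le hr (meromorphic_of_entire hc) (order_ne_top hc c0)
    (f₂ := b⁻¹) (meromorphic_of_entire hb).inv
    (fun z => by rw [meromorphicOrderAt_inv]; simpa using order_ne_top hb b0 z)
  have h3 := characteristic_sub_characteristic_inv_of_ne_zero (meromorphic_of_entire hb) hr0
  rw [Pi.add_apply] at h2
  linarith

/-- Poisson's formula for `re ∘ g`, with the Poisson kernel bounded by its maximum and the real part
by its positive part; the mean of the latter is the proximity function of `exp ∘ g`. -/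
lemma re_le_characteristic {g : ℂ → ℂ} (hg : Differentiable ℂ g) {R : ℝ} (hR : 1 ≤ R) {w : ℂ}
    (hw : ‖w‖ < R) :
    (g w).re ≤ (R + ‖w‖) / (R - ‖w‖) * characteristic (fun z => Complex.exp (g z)) ⊤ R := by
  have hwb : w ∈ ball (0 : ℂ) R := by simpa using hw
  have hR0 : 0 < R := by linarith
  have hK := continuousOn_herglotzRieszKernel_sphere hwb
  have hKre : ContinuousOn (re ∘ herglotzRieszKernel 0 w) (sphere (0:ℂ) |R|) :=
    Complex.continuous_re.comp_continuousOn hK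
  have hfd : Differentiable ℂ (fun z => Complex.exp (g z)) := hg.cexp
  have hlog : ∀ z, log⁺ ‖Complex.exp (g z)‖ = max 0 (g z).re := fun z => by
    rw [Real.posLog_apply, Complex.norm_exp, Real.log_exp]
  have hpois := hg.diffContOnCl.circleAverage_re_herglotzRieszKernel_smul hwb
  have hci : CircleIntegrable ((re ∘ herglotzRieszKernel 0 w) • g) 0 R :=
    (hKre.smul hg.continuous.continuousOn).circleIntegrable'
  have h1 : (g w).re = Real.circleAverage
      (fun z => (herglotzRieszKernel 0 w z).re * (g z).re) 0 R := by
    rw [← hpois]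
    have := (reCLM.circleAverage_comp_comm hci)
    rw [reCLM_apply] at this
    rw [← this]
    congr 1
    funext z
    simp
  have hprox : proximity (fun z => Complex.exp (g z)) ⊤ R
      ≤ characteristic (fun z => Complex.exp (g z)) ⊤ R := by
    rw [characteristic, Pi.add_apply]
    linarith [logCounting_nonneg (f := fun z => Complex.exp (g z)) (e := ⊤) hR]
  have hpos : 0 ≤ (R + ‖w‖) / (R - ‖w‖) :=
    div_nonneg (by positivity) (by linarith)
  refine le_trans ?_ (mul_le_mul_of_nonneg_left hprox hpos)
  rw [h1, proximity_top, ← smul_eq_mul, ← Real.circleAverage_fun_smul]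
  apply Real.circleAverage_mono
  · exact (hKre.mul (Complex.continuous_re.comp hg.continuous).continuousOn).circleIntegrable'
  · apply ContinuousOn.circleIntegrable'
    have : Continuous fun z => log⁺ ‖Complex.exp (g z)‖ := by
      have := hfd.continuous
      fun_prop
    exact (this.const_smul ((R + ‖w‖) / (R - ‖w‖))).continuousOn
  · intro z hz
    rw [abs_of_pos hR0] at hz
    have k1 := re_herglotzRieszKernel_le hz hwb
    have k2 := le_re_herglotzRieszKernel hz hwb
    rw [← herglotzRieszKernel_def, sub_zero] at k1 k2
    have k3 : 0 ≤ (R - ‖w‖) / (R + ‖w‖) := div_nonneg (by linarith) (by positivity)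
    simp only [smul_eq_mul]
    rw [hlog]
    calc _ ≤ (herglotzRieszKernel 0 w z).re * max 0 (g z).re :=
          mul_le_mul_of_nonneg_left (le_max_right _ _) (k3.trans k2)
      _ ≤ _ := mul_le_mul_of_nonneg_right k1 (le_max_left _ _)

end

/-! ### Gauges, slow functions and growth -/

section

open Complex Metric Set Filter Topology Real

/-- A gauge is a monotone function bounded below by `1`, where only radii `r ≥ 1` matter. It will
be `1` plus a sum of Nevanlinna characteristics. -/
structure IsGauge (T : ℝ → ℝ) : Prop where
  mono : MonotoneOn T (Ici 1)
  one_le : ∀ r, 1 ≤ r → 1 ≤ T r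

lemma IsGauge.one_le_ratio {T : ℝ → ℝ} (hT : IsGauge T) {r R : ℝ} (hr : 1 ≤ r) (hR : r < R) :
    1 ≤ R * T R / (R - r) := by
  have := hT.one_le R (by linarith)
  rw [le_div_iff₀ (by linarith)]
  nlinarith

/-- An entire function is slow with respect to `T` if on each disc `‖z‖ ≤ r` it is bounded by a
constant times a fixed power of `R * T R / (R - r)`, uniformly in `1 ≤ r < R`. Leaving `R` free
makes the class stable under differentiation without any exceptional set of radii. -/
def Slow (T : ℝ → ℝ) (a : ℂ → ℂ) : Prop :=
  Differentiable ℂ a ∧ ∃ C : ℝ, 0 ≤ C ∧ ∃ k : ℕ, ∀ r R : ℝ, 1 ≤ r → r < R →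
    ∀ z : ℂ, ‖z‖ ≤ r → ‖a z‖ ≤ C * (R * T R / (R - r)) ^ k

lemma Slow.add {T : ℝ → ℝ} (hT : IsGauge T) {a b : ℂ → ℂ} (ha : Slow T a) (hb : Slow T b) :
    Slow T (a + b) := by
  obtain ⟨ha, C, hC, k, h⟩ := ha
  obtain ⟨hb, D, hD, l, h'⟩ := hb
  refine ⟨ha.add hb, C + D, by positivity, k + l, fun r R hr hR z hz => ?_⟩
  have hX := hT.one_le_ratio hr hR
  calc ‖(a + b) z‖ ≤ ‖a z‖ + ‖b z‖ := norm_add_le _ _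
    _ ≤ C * (R * T R / (R - r)) ^ k + D * (R * T R / (R - r)) ^ l :=
      add_le_add (h r R hr hR z hz) (h' r R hr hR z hz)
    _ ≤ C * (R * T R / (R - r)) ^ (k + l) + D * (R * T R / (R - r)) ^ (k + l) := by
      gcongr <;> first | exact hX | omega
    _ = _ := by ring

lemma Slow.mul {T : ℝ → ℝ} {a b : ℂ → ℂ} (ha : Slow T a) (hb : Slow T b) :
    Slow T (a * b) := by
  obtain ⟨ha, C, hC, k, h⟩ := ha
  obtain ⟨hb, D, hD, l, h'⟩ := hb
  refine ⟨ha.mul hb, C * D, by positivity, k + l, fun r R hr hR z hz => ?_⟩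
  calc ‖(a * b) z‖ = ‖a z‖ * ‖b z‖ := norm_mul _ _
    _ ≤ (C * (R * T R / (R - r)) ^ k) * (D * (R * T R / (R - r)) ^ l) :=
      mul_le_mul (h r R hr hR z hz) (h' r R hr hR z hz) (norm_nonneg _)
        ((norm_nonneg _).trans (h r R hr hR z hz))
    _ = _ := by ring

/-- Cauchy's estimate on circles of radius `(R - r) / 2`. -/
lemma Slow.deriv {T : ℝ → ℝ} (hT : IsGauge T) {a : ℂ → ℂ} (ha : Slow T a) :
    Slow T (deriv a) := by
  obtain ⟨ha, C, hC, k, h⟩ := ha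
  refine ⟨ha.deriv, C * 2 ^ (k + 1), by positivity, k + 1, fun r R hr hR z hz => ?_⟩
  have hT1 := hT.one_le R (by linarith)
  have hs : 0 < R - r := by linarith
  have hX := hT.one_le_ratio hr hR
  have key : ‖_root_.deriv a z‖ ≤ C * (R * T R / (R - (r + R) / 2)) ^ k / ((R - r) / 2) := by
    apply Complex.norm_deriv_le_of_forall_mem_sphere_norm_le (by linarith) ha.diffContOnCl
    intro w hw
    apply h _ _ (by linarith) (by linarith)
    have h1 : ‖w - z‖ = (R - r) / 2 := by simpa using mem_sphere_iff_norm.1 hw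
    have h2 : ‖w‖ ≤ ‖w - z‖ + ‖z‖ := by simpa using norm_add_le (w - z) z
    linarith
  have e1 : R * T R / (R - (r + R) / 2) = 2 * (R * T R / (R - r)) := by
    have : R - (r + R) / 2 = (R - r) / 2 := by ring
    rw [this]; field_simp
  have e2 : 1 / (R - r) ≤ R * T R / (R - r) := by
    gcongr; nlinarith
  have hX0 : 0 ≤ R * T R / (R - r) := by linarith
  rw [e1] at key
  calc _ ≤ _ := key
    _ = C * 2 ^ (k + 1) * (R * T R / (R - r)) ^ k * (1 / (R - r)) := by
      rw [mul_pow, pow_succ]; field_simp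
    _ ≤ C * 2 ^ (k + 1) * (R * T R / (R - r)) ^ k * (R * T R / (R - r)) := by gcongr
    _ = _ := by ring

/-- The slow functions as a `ℂ`-subalgebra of all functions `ℂ → ℂ`. -/
def slowAlgebra {T : ℝ → ℝ} (hT : IsGauge T) : Subalgebra ℂ (ℂ → ℂ) where
  carrier := {a | Slow T a}
  mul_mem' := Slow.mul
  add_mem' := Slow.add hT
  algebraMap_mem' c := ⟨differentiable_const c, ‖c‖, norm_nonneg _, 0, fun r R _ _ z _ => by
    simp [Pi.algebraMap_apply]⟩

/-- Borel's growth lemma, in the weak form that the doubling inequality fails at arbitrarily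
large radii: if `T (r + 1 / T r) > 2 * T r` for all `r ≥ r₀`, then iterating `r ↦ r + 1 / T r` stays in
the bounded interval `[r₀, r₀ + 2]` while `T` grows like `2 ^ n`. -/
lemma exists_not_doubling {T : ℝ → ℝ} (hT : IsGauge T) (r₀ : ℝ) (hr₀ : 1 ≤ r₀) :
    ∃ r, r₀ ≤ r ∧ T (r + 1 / T r) ≤ 2 * T r := by
  by_contra! hcon
  let s : ℕ → ℝ := fun n => (fun r => r + 1 / T r)^[n] r₀
  have hs : ∀ n, s (n + 1) = s n + 1 / T (s n) := fun n => by
    simp only [s, Function.iterate_succ_apply']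
  have h : ∀ n, r₀ ≤ s n ∧ 2 ^ n ≤ T (s n) ∧ s n ≤ r₀ + 2 - 2 * (1 / 2) ^ n := by
    intro n
    induction n with
    | zero => simpa [s] using hT.one_le r₀ hr₀
    | succ n ih =>
      obtain ⟨h1, h2, h3⟩ := ih
      have hp : (0 : ℝ) < 2 ^ n := by positivity
      have hTp : 0 < T (s n) := by linarith
      have h4 : 1 / T (s n) ≤ (1 / 2) ^ n := by
        rw [one_div_pow]
        exact one_div_le_one_div_of_le hp h2
      have h5 := hcon (s n) h1
      rw [hs]
      refine ⟨by have : 0 < 1 / T (s n) := by positivity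
                 linarith, ?_, ?_⟩
      · rw [pow_succ]; linarith
      · rw [pow_succ]; linarith
  obtain ⟨n, hn⟩ := pow_unbounded_of_one_lt (T (r₀ + 2)) (one_lt_two)
  obtain ⟨h1, h2, h3⟩ := h n
  have : T (s n) ≤ T (r₀ + 2) := by
    apply hT.mono (mem_Ici.2 (by linarith)) (mem_Ici.2 (by linarith))
    have : (0:ℝ) ≤ 2 * (1 / 2) ^ n := by positivity
    linarith
  linarith

/-- A gauge bounded by a logarithm of itself at a larger radius is logarithmic along a sequence
of radii tending to infinity. -/
lemma gauge_le_log {T : ℝ → ℝ} (hT : IsGauge T) {K : ℝ} (hK : 0 ≤ K)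
    (h : ∀ r R, 1 ≤ r → r < R → T r ≤ K * (1 + Real.log (R * T R / (R - r)))) :
    ∃ C, ∀ r₀, ∃ r, r₀ ≤ r ∧ T r ≤ C * (1 + Real.log r) := by
  refine ⟨6 * K + 4 * K * Real.log (4 * (K + 1)), fun r₀ => ?_⟩
  obtain ⟨r, hr, hd⟩ := exists_not_doubling hT (max 1 r₀) (le_max_left _ _)
  have hr1 : 1 ≤ r := (le_max_left _ _).trans hr
  refine ⟨r, (le_max_right _ _).trans hr, ?_⟩
  have hT1 := hT.one_le r hr1
  have hT0 : 0 < T r := by linarith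
  have hi : 0 < 1 / T r := by positivity
  have hi1 : 1 / T r ≤ 1 := by rw [div_le_one hT0]; exact hT1
  have h1 := h r (r + 1 / T r) hr1 (by linarith)
  have hlr : 0 ≤ Real.log r := Real.log_nonneg hr1
  have hl4 : 0 ≤ Real.log (4 * (K + 1)) := Real.log_nonneg (by linarith)
  have hX : (r + 1 / T r) * T (r + 1 / T r) / (r + 1 / T r - r) ≤ 4 * r * T r ^ 2 := by
    have hTR := hT.one_le (r + 1 / T r) (by linarith)
    rw [add_sub_cancel_left, div_div_eq_mul_div, div_one]
    calc _ ≤ (2 * r) * (2 * T r) * T r := by gcongr; linarith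
      _ = _ := by ring
  have hX1 := hT.one_le_ratio hr1 (R := r + 1 / T r) (by linarith)
  have hlX := Real.log_le_log (by linarith) hX
  rw [Real.log_mul (by positivity) (by positivity), Real.log_mul (by norm_num) (by positivity),
    Real.log_pow] at hlX
  have hl2 : Real.log 4 ≤ 2 := by
    rw [show (4:ℝ) = 2 ^ 2 by norm_num, Real.log_pow]
    have := Real.log_two_lt_d9
    push_cast; linarith
  -- The slope `1 / (4 * (K + 1))` lets the `log (T r)` term be absorbed into `T r / 2`.
  have hlT : Real.log (T r) ≤ T r / (4 * (K + 1)) + Real.log (4 * (K + 1)) := by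
    have := Real.log_le_sub_one_of_pos (show 0 < T r / (4 * (K + 1)) by positivity)
    rw [Real.log_div (by positivity) (by positivity)] at this
    linarith
  have h2 : K * (T r / (4 * (K + 1))) ≤ T r / 4 := by
    rw [← mul_div_assoc, div_le_div_iff₀ (by positivity) (by norm_num)]
    nlinarith
  have h3 : T r ≤ K * (3 + Real.log r) + 2 * (K * Real.log (T r)) := by
    have := mul_le_mul_of_nonneg_left (show 1 + Real.log ((r + 1 / T r) * T (r + 1 / T r) / (r + 1 / T r - r)) ≤ 3 + Real.log r + 2 * Real.log (T r) by push_cast at hlX; linarith) hK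
    linarith
  have h4 := mul_le_mul_of_nonneg_left hlT hK
  have h5 : 0 ≤ K * Real.log r := by positivity
  have h6 : 0 ≤ K * Real.log (4 * (K + 1)) * Real.log r := by positivity
  nlinarith

/-- An entire function that is `O(log R)` on `‖z‖ ≤ R / 2` along a sequence of radii is constant. -/
lemma const_of_log_bound {T : ℝ → ℝ} {g : ℂ → ℂ} (hg : Differentiable ℂ g) {C K : ℝ}
    (hK : 0 ≤ K)
    (hb : ∀ r R, 1 ≤ r → r < R → ∀ z, ‖z‖ ≤ r → ‖g z‖ ≤ K * ((R / (R - r)) ^ 2 * T R))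
    (hT : ∀ r₀, ∃ r, r₀ ≤ r ∧ T r ≤ C * (1 + Real.log r)) (z : ℂ) : g z = g 0 := by
  apply is_const_of_deriv_eq_zero hg
  intro z
  rw [← norm_le_zero_iff]
  have hlim : Tendsto (fun R : ℝ => 16 * K * C * ((1 + Real.log R) / R)) atTop (𝓝 0) := by
    have h1 : Tendsto (fun R : ℝ => Real.log R / R) atTop (𝓝 0) :=
      Real.isLittleO_log_id_atTop.tendsto_div_nhds_zero
    have h2 : Tendsto (fun R : ℝ => R⁻¹) atTop (𝓝 0) := tendsto_inv_atTop_zero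
    have h3 := (h2.add h1).const_mul (16 * K * C)
    simp only [add_zero, mul_zero] at h3
    refine h3.congr fun R => ?_
    ring
  refine le_of_forall_pos_lt_add fun ε hε => ?_
  obtain ⟨R₁, hR₁⟩ := eventually_atTop.1 (hlim.eventually_lt_const hε)
  obtain ⟨R, hR, hTR⟩ := hT (max R₁ (max 2 (4 * ‖z‖)))
  simp only [max_le_iff] at hR
  obtain ⟨hR1, hR2, hRz⟩ := hR
  have key : ‖deriv g z‖ ≤ K * (4 * (C * (1 + Real.log R))) / (R / 4) := by
    apply Complex.norm_deriv_le_of_forall_mem_sphere_norm_le (by linarith) hg.diffContOnCl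
    intro w hw
    have h1 : ‖w - z‖ = R / 4 := by simpa using mem_sphere_iff_norm.1 hw
    have h2 : ‖w‖ ≤ ‖w - z‖ + ‖z‖ := by simpa using norm_add_le (w - z) z
    refine (hb (R / 2) R (by linarith) (by linarith) w (by linarith)).trans ?_
    have : R / (R - R / 2) = 2 := by field_simp; norm_num
    rw [this]
    refine mul_le_mul_of_nonneg_left ?_ hK
    linarith
  have := hR₁ R hR1
  calc _ ≤ _ := key
    _ = 16 * K * C * ((1 + Real.log R) / R) := by field_simp; ring
    _ < _ := by linarith

end

/-! ### Elimination by Wronskians over a differential algebra -/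

section

open Complex Metric Set Filter Topology

/-- Two entire functions with vanishing Wronskian are proportional: their quotient is constant near
a point where `u` is nonzero, and the identity theorem applies. -/
lemma eq_const_smul_of_wronskian {u F : ℂ → ℂ} (hu : Differentiable ℂ u) (hF : Differentiable ℂ F)
    (u0 : u ≠ 0) (h : u * deriv F = deriv u * F) : ∃ c : ℂ, F = c • u := by
  obtain ⟨x, hx⟩ := Function.ne_iff.1 u0
  obtain ⟨ε, hε, hball⟩ := Metric.eventually_nhds_iff_ball.1
    (hu.continuous.continuousAt.eventually_ne hx)
  refine ⟨F x / u x, ?_⟩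
  have hq : ∀ z ∈ ball x ε, HasDerivAt (fun w => F w / u w) 0 z := by
    intro z hz
    refine ((hF z).hasDerivAt.div (hu z).hasDerivAt (hball z hz)).congr_deriv ?_
    have := congrFun h z
    simp only [Pi.mul_apply] at this
    rw [mul_comm (deriv F z), this]
    simp [mul_comm]
  have hc : ∀ z ∈ ball x ε, F z = (F x / u x) * u z := by
    intro z hz
    have hd : DifferentiableOn ℂ (fun w => F w / u w) (ball x ε) :=
      fun w hw => (hq w hw).differentiableAt.differentiableWithinAt
    have := isOpen_ball.is_const_of_deriv_eq_zero (convex_ball x ε).isPreconnected hd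
      (fun w hw => (hq w hw).deriv) hz (mem_ball_self hε)
    have h2 : u z ≠ 0 := hball z hz
    beta_reduce at this
    rw [← this]
    field_simp
  have ha : AnalyticOnNhd ℂ F univ := fun z _ => hF.analyticAt z
  have hb : AnalyticOnNhd ℂ ((F x / u x) • u) univ := fun z _ => (hu.const_smul _).analyticAt z
  exact ha.eq_of_eventuallyEq hb (eventually_of_mem (ball_mem_nhds x hε) hc)

/-- Commensurability over a function algebra `A`: the quotient of `e` and `e'` is a nonzero quotient
of elements of `A`. -/
def Comm (A : Subalgebra ℂ (ℂ → ℂ)) (e e' : ℂ → ℂ) : Prop :=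
  ∃ b ∈ A, ∃ c ∈ A, b ≠ 0 ∧ c ≠ 0 ∧ b * e = c * e'

lemma mul_ne_zero_entire {f g : ℂ → ℂ} (hf : Differentiable ℂ f) (hg : Differentiable ℂ g)
    (f0 : f ≠ 0) (g0 : g ≠ 0) : f * g ≠ 0 := fun h =>
  (mul_eq_zero_entire hf hg h).elim f0 g0

lemma Comm.refl (A : Subalgebra ℂ (ℂ → ℂ)) (e : ℂ → ℂ) : Comm A e e :=
  ⟨1, A.one_mem, 1, A.one_mem, one_ne_zero, one_ne_zero, rfl⟩

lemma Comm.symm {A : Subalgebra ℂ (ℂ → ℂ)} {e e' : ℂ → ℂ} (h : Comm A e e') : Comm A e' e := by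
  obtain ⟨b, hb, c, hc, b0, c0, h⟩ := h
  exact ⟨c, hc, b, hb, c0, b0, h.symm⟩

lemma Comm.trans {A : Subalgebra ℂ (ℂ → ℂ)} (hA : ∀ a ∈ A, Differentiable ℂ a)
    {e e' e'' : ℂ → ℂ} (h : Comm A e e') (h' : Comm A e' e'') : Comm A e e'' := by
  obtain ⟨b, hb, c, hc, b0, c0, h⟩ := h
  obtain ⟨b', hb', c', hc', b0', c0', h'⟩ := h'
  refine ⟨b' * b, A.mul_mem hb' hb, c * c', A.mul_mem hc hc',
    mul_ne_zero_entire (hA _ hb') (hA _ hb) b0' b0,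
    mul_ne_zero_entire (hA _ hc) (hA _ hc') c0 c0', ?_⟩
  rw [mul_assoc, h, mul_left_comm, h', mul_assoc]

/-- An `A`-combination of functions commensurable to `e₀` equals `N / B * e₀` with `N, B ∈ A`. -/
lemma sum_common_denominator {ι : Type*} {A : Subalgebra ℂ (ℂ → ℂ)}
    (hA : ∀ a ∈ A, Differentiable ℂ a) (S : Finset ι) (a e : ι → ℂ → ℂ) (e₀ : ℂ → ℂ)
    (ha : ∀ j ∈ S, a j ∈ A) (hcl : ∀ j ∈ S, Comm A (e j) e₀) :
    ∃ B ∈ A, ∃ N ∈ A, B ≠ 0 ∧ B * ∑ j ∈ S, a j * e j = N * e₀ := by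
  classical
  induction S using Finset.induction_on with
  | empty => exact ⟨1, A.one_mem, 0, A.zero_mem, one_ne_zero, by simp⟩
  | insert i S hi ih =>
    obtain ⟨B, hB, N, hN, B0, h⟩ := ih (fun j hj => ha j (Finset.mem_insert_of_mem hj))
      (fun j hj => hcl j (Finset.mem_insert_of_mem hj))
    obtain ⟨b, hb, c, hc, b0, -, h'⟩ := hcl i (Finset.mem_insert_self _ _)
    have hai := ha i (Finset.mem_insert_self _ _)
    refine ⟨b * B, A.mul_mem hb hB, B * a i * c + b * N,
      A.add_mem (A.mul_mem (A.mul_mem hB hai) hc) (A.mul_mem hb hN),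
      mul_ne_zero_entire (hA _ hb) (hA _ hB) b0 B0, ?_⟩
    rw [Finset.sum_insert hi]
    linear_combination (B * a i) * h' + b * h

/-- Elimination: over a differential algebra `A` of entire functions, a linear relation among
zero-free functions with logarithmic derivatives in `A` splits along commensurability classes.
With `u = a i * e i` one term of the relation, taking Wronskians against `u` removes that term and
gives a relation among the others, whose class sums vanish by induction. Hence each class sum
`F` not involving `i` has vanishing Wronskian with `u`, so `F = c • u`; if `c ≠ 0` this would make `e i`
commensurable to that class. -/
lemma class_sum_eq_zero {ι κ : Type*} [DecidableEq κ] {A : Subalgebra ℂ (ℂ → ℂ)}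
    (hA : ∀ a ∈ A, Differentiable ℂ a) (hD : ∀ a ∈ A, deriv a ∈ A)
    (e l : ι → ℂ → ℂ) (he : ∀ j, Differentiable ℂ (e j)) (e0 : ∀ j z, e j z ≠ 0)
    (cl : ι → κ) (hcl : ∀ i j, cl i = cl j ↔ Comm A (e i) (e j))
    (S : Finset ι) (hl : ∀ j ∈ S, l j ∈ A) (hel : ∀ j ∈ S, deriv (e j) = l j * e j)
    (a : ι → ℂ → ℂ) (ha : ∀ j ∈ S, a j ∈ A) (hsum : ∑ j ∈ S, a j * e j = 0) (q : κ) :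
    ∑ j ∈ S with cl j = q, a j * e j = 0 := by
  classical
  induction S using Finset.induction_on generalizing a q with
  | empty => simp
  | insert i S hi ih =>
    have hl' : ∀ j ∈ S, l j ∈ A := fun j hj => hl j (Finset.mem_insert_of_mem hj)
    have hel' : ∀ j ∈ S, deriv (e j) = l j * e j := fun j hj => hel j (Finset.mem_insert_of_mem hj)
    have ha' : ∀ j ∈ S, a j ∈ A := fun j hj => ha j (Finset.mem_insert_of_mem hj)
    have hai : a i ∈ A := ha i (Finset.mem_insert_self _ _)
    have hli : l i ∈ A := hl i (Finset.mem_insert_self _ _)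
    have heli := hel i (Finset.mem_insert_self _ _)
    have ih := ih hl' hel'
    have dae : ∀ j ∈ insert i S, Differentiable ℂ (a j * e j) :=
      fun j hj => (hA _ (ha j hj)).mul (he j)
    have hsum' := hsum
    rw [Finset.sum_insert hi] at hsum
    by_cases ai0 : a i = 0
    · rw [ai0, zero_mul, zero_add] at hsum
      rw [Finset.filter_insert]
      split_ifs with hq
      · rw [Finset.sum_insert (by simp [hi]), ai0, zero_mul, zero_add, ih a ha' hsum q]
      · exact ih a ha' hsum q
    set u := a i * e i with hu
    have hud : Differentiable ℂ u := dae i (Finset.mem_insert_self _ _)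
    have ei0 : e i ≠ 0 := fun h => e0 i 0 (congrFun h 0)
    have u0 : u ≠ 0 := mul_ne_zero_entire (hA _ hai) (he i) ai0 ei0
    have dmul : ∀ j ∈ insert i S, deriv (a j * e j) = (deriv (a j) + a j * l j) * e j := by
      intro j hj
      funext z
      have := congrFun (hel j hj) z
      rw [deriv_mul (hA _ (ha j hj) z) (he j z)]
      simp only [Pi.add_apply, Pi.mul_apply] at this ⊢
      rw [this]
      ring
    set b : ι → ℂ → ℂ := fun j =>
      a i * (deriv (a j) + a j * l j) - (deriv (a i) + a i * l i) * a j with hb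
    have hbA : ∀ j ∈ S, b j ∈ A := fun j hj =>
      A.sub_mem (A.mul_mem hai (A.add_mem (hD _ (ha' j hj)) (A.mul_mem (ha' j hj) (hl' j hj))))
        (A.mul_mem (A.add_mem (hD _ hai) (A.mul_mem hai hli)) (ha' j hj))
    have hbe : ∀ j ∈ S, e i * (b j * e j) = u * deriv (a j * e j) - deriv u * (a j * e j) := by
      intro j hj
      rw [dmul j (Finset.mem_insert_of_mem hj), hu, dmul i (Finset.mem_insert_self _ _)]
      simp only [hb]
      ring
    have hW : ∀ S' ⊆ S, e i * ∑ j ∈ S', b j * e j =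
        u * deriv (∑ j ∈ S', a j * e j) - deriv u * ∑ j ∈ S', a j * e j := by
      intro S' hS'
      have : deriv (∑ j ∈ S', a j * e j) = ∑ j ∈ S', deriv (a j * e j) := by
        funext z
        rw [deriv_sum (fun j hj => dae j (Finset.mem_insert_of_mem (hS' hj)) z)]
        simp
      rw [this, Finset.mul_sum, Finset.mul_sum, Finset.mul_sum, ← Finset.sum_sub_distrib]
      exact Finset.sum_congr rfl fun j hj => hbe j (hS' hj)
    have cancel : ∀ G : ℂ → ℂ, e i * G = 0 → G = 0 := by
      intro G hG
      funext z
      exact (mul_eq_zero.1 (congrFun hG z)).resolve_left (e0 i z)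
    have hbsum : ∑ j ∈ S, b j * e j = 0 := by
      apply cancel
      rw [hW S subset_rfl, eq_neg_of_add_eq_zero_right hsum]
      have : deriv (-u) = - deriv u := by funext z; simp
      rw [this]
      ring
    have other : ∀ q, q ≠ cl i → ∑ j ∈ insert i S with cl j = q, a j * e j = 0 := by
      intro q hq
      rw [Finset.filter_insert, if_neg hq.symm]
      set F := ∑ j ∈ S with cl j = q, a j * e j with hF
      have hFd : Differentiable ℂ F := Differentiable.sum fun j hj =>
        dae j (Finset.mem_insert_of_mem (Finset.mem_filter.1 hj).1)
      have hw : u * deriv F = deriv u * F := by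
        have := hW _ (Finset.filter_subset (fun j => cl j = q) S)
        rw [ih b hbA hbsum q, mul_zero] at this
        exact (sub_eq_zero.1 this.symm)
      obtain ⟨c, hc⟩ := eq_const_smul_of_wronskian hud hFd u0 hw
      by_contra hF0
      have hc0 : c ≠ 0 := by
        rintro rfl
        exact hF0 (by rw [hc, zero_smul])
      obtain ⟨j₀, hj₀⟩ : (S.filter (fun j => cl j = q)).Nonempty := by
        by_contra hne
        rw [Finset.not_nonempty_iff_eq_empty] at hne
        exact hF0 (by rw [hF, hne, Finset.sum_empty])
      have hj₀q := (Finset.mem_filter.1 hj₀).2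
      obtain ⟨B, hB, N, hN, B0, hBN⟩ := sum_common_denominator hA
        (S.filter (fun j => cl j = q)) a e (e j₀) (fun j hj => ha' j (Finset.mem_filter.1 hj).1)
        (fun j hj => (hcl _ _).1 ((Finset.mem_filter.1 hj).2.trans hj₀q.symm))
      rw [← hF, hc] at hBN
      have hBA : B * (c • a i) ∈ A := A.mul_mem hB (A.smul_mem hai c)
      have hBA0 : B * (c • a i) ≠ 0 :=
        mul_ne_zero_entire (hA _ hB) (hA _ (A.smul_mem hai c)) B0 (smul_ne_zero hc0 ai0)
      have heq : B * (c • a i) * e i = N * e j₀ := by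
        rw [← hBN, hu, mul_assoc, smul_mul_assoc]
      apply hq
      rw [← hj₀q, eq_comm, hcl]
      refine ⟨_, hBA, N, hN, hBA0, ?_, heq⟩
      rintro rfl
      rw [zero_mul] at heq
      exact mul_ne_zero_entire (hA _ hBA) (he i) hBA0 ei0 heq
    by_cases hq : q = cl i
    · subst hq
      rw [← hsum', ← Finset.sum_fiberwise_of_maps_to
        (t := (insert i S).image cl) (g := cl) (fun j hj => Finset.mem_image_of_mem cl hj)]
      rw [Finset.sum_eq_single (cl i) (fun q _ hq => other q hq)]
      intro h
      exact absurd (Finset.mem_image_of_mem cl (Finset.mem_insert_self i S)) h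
    · exact other q hq

end

/-! ### Slow logarithms and proportionality classes -/

section

open Complex Metric Set Filter Topology ValueDistribution Real

/-- If `exp ∘ g` has characteristic at most `T`, then `g` itself is at most linear in `T`: its real
part is bounded above by Poisson's formula, hence its modulus by Borel–Carathéodory. -/
lemma norm_log_le {T : ℝ → ℝ} (hT : IsGauge T) {g : ℂ → ℂ} (hg : Differentiable ℂ g)
    (h : ∀ r, 1 ≤ r → characteristic (fun z => Complex.exp (g z)) ⊤ r ≤ T r) :
    ∃ K : ℝ, 0 ≤ K ∧ ∀ r R, 1 ≤ r → r < R → ∀ z, ‖z‖ ≤ r →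
      ‖g z‖ ≤ K * ((R / (R - r)) ^ 2 * T R) := by
  refine ⟨16 + 4 * ‖g 0‖, by positivity, fun r R hr hR z hz => ?_⟩
  have hT1 := hT.one_le R (by linarith)
  have hd : 0 < R - r := by linarith
  have hz0 := norm_nonneg z
  have hR0 : 0 < R := by linarith
  set Q := R / (R - r) with hQ
  have hQ1 : 1 ≤ Q := by rw [hQ, le_div_iff₀ hd]; linarith
  have hM : 0 < 4 * Q * T R := by positivity
  -- Borel–Carathéodory is applied on the disc of radius `(r + R) / 2`, halfway between `r` and `R`.
  have hmap : MapsTo g (ball 0 ((r + R) / 2)) {z | z.re ≤ 4 * Q * T R} := by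
    intro w hw
    have hw' : ‖w‖ < (r + R) / 2 := by simpa using hw
    have hc := h R (by linarith)
    refine (re_le_characteristic hg (R := R) (by linarith) (by linarith)).trans ?_
    have h1 : (R + ‖w‖) / (R - ‖w‖) ≤ 4 * Q := by
      rw [hQ, ← mul_div_assoc, div_le_div_iff₀ (by linarith) hd]
      nlinarith
    exact mul_le_mul h1 hc (characteristic_nonneg (by linarith))
      (by positivity)
  have hb := Complex.borelCaratheodory hM hg.differentiableOn hmap (by linarith)
    (show z ∈ ball (0 : ℂ) ((r + R) / 2) by simp; linarith)
  have hden : 0 < (r + R) / 2 - ‖z‖ := by linarith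
  have q1 : ‖z‖ / ((r + R) / 2 - ‖z‖) ≤ 2 * Q := by
    rw [hQ, ← mul_div_assoc, div_le_div_iff₀ hden hd]
    nlinarith
  have q2 : ((r + R) / 2 + ‖z‖) / ((r + R) / 2 - ‖z‖) ≤ 4 * Q := by
    rw [hQ, ← mul_div_assoc, div_le_div_iff₀ hden hd]
    nlinarith
  have q3 : Q ≤ Q ^ 2 * T R := by
    have : Q * 1 ≤ Q * (Q * T R) := by gcongr; nlinarith
    nlinarith
  rw [mul_div_assoc, mul_div_assoc] at hb
  calc ‖g z‖ ≤ _ := hb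
    _ ≤ 2 * (4 * Q * T R) * (2 * Q) + ‖g 0‖ * (4 * Q) := by gcongr
    _ ≤ 2 * (4 * Q * T R) * (2 * Q) + ‖g 0‖ * (4 * (Q ^ 2 * T R)) := by gcongr
    _ = _ := by ring

lemma slow_log {T : ℝ → ℝ} (hT : IsGauge T) {g : ℂ → ℂ} (hg : Differentiable ℂ g)
    (h : ∀ r, 1 ≤ r → characteristic (fun z => Complex.exp (g z)) ⊤ r ≤ T r) : Slow T g := by
  obtain ⟨K, hK, hb⟩ := norm_log_le hT hg h
  refine ⟨hg, K, hK, 2, fun r R hr hR z hz => (hb r R hr hR z hz).trans ?_⟩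
  have hT1 := hT.one_le R (by linarith)
  refine mul_le_mul_of_nonneg_left ?_ hK
  rw [mul_div_right_comm, mul_pow]
  gcongr
  nlinarith

lemma slow_characteristic {T : ℝ → ℝ} (hT : IsGauge T) {b : ℂ → ℂ} (hb : Slow T b) :
    ∃ K : ℝ, 0 ≤ K ∧ ∀ r R, 1 ≤ r → r < R →
      characteristic b ⊤ r ≤ K * (1 + Real.log (R * T R / (R - r))) := by
  obtain ⟨hbd, C, hC, k, h⟩ := hb
  refine ⟨log⁺ C + k, add_nonneg Real.posLog_nonneg (by positivity), fun r R hr hR => ?_⟩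
  have hX := hT.one_le_ratio hr hR
  have hl := Real.log_nonneg hX
  refine (characteristic_entire_le hbd (by linarith) (h r R hr hR)).trans ?_
  refine Real.posLog_mul.trans ?_
  rw [Real.posLog_pow, Real.posLog_eq_log (x := R * T R / (R - r))
    (by rwa [abs_of_nonneg (by linarith)])]
  have : 0 ≤ log⁺ C := Real.posLog_nonneg
  nlinarith [mul_nonneg this hl]

lemma quotient_characteristic {T : ℝ → ℝ} (hT : IsGauge T) {b c h : ℂ → ℂ} (hb : Slow T b)
    (hc : Slow T c) (b0 : b ≠ 0) (c0 : c ≠ 0) (heq : b * h = c) :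
    ∃ K : ℝ, 0 ≤ K ∧ ∀ r R, 1 ≤ r → r < R →
      characteristic h ⊤ r ≤ K * (1 + Real.log (R * T R / (R - r))) := by
  obtain ⟨K, hK, h1⟩ := slow_characteristic hT hb
  obtain ⟨L, hL, h2⟩ := slow_characteristic hT hc
  obtain ⟨M, h3⟩ := characteristic_quotient hb.1 hc.1 b0 c0 heq
  refine ⟨K + L + |M|, by positivity, fun r R hr hR => ?_⟩
  have hl := Real.log_nonneg (hT.one_le_ratio hr hR)
  have := mul_nonneg (abs_nonneg M) hl
  linarith [h1 r R hr hR, h2 r R hr hR, h3 r hr, le_abs_self M]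

/-- If the gauge is the total characteristic of the functions `exp ∘ g j`, and each of these is a
quotient of slow functions, then `T` is bounded by the logarithm of itself at a larger radius,
and all `g j` are constant. -/
lemma const_of_comm_one {ι : Type*} {T : ℝ → ℝ} (hT : IsGauge T) (S : Finset ι)
    (g : ι → ℂ → ℂ) (hg : ∀ j, Differentiable ℂ (g j))
    (hTS : ∀ r, 1 ≤ r → T r = 1 + ∑ j ∈ S, characteristic (fun z => Complex.exp (g j z)) ⊤ r)
    (hcomm : ∀ j ∈ S, Comm (slowAlgebra hT) (fun z => Complex.exp (g j z)) 1) :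
    ∀ j ∈ S, ∀ z, g j z = g j 0 := by
  have hK : ∀ j, ∃ K : ℝ, 0 ≤ K ∧ (j ∈ S → ∀ r R, 1 ≤ r → r < R →
      characteristic (fun z => Complex.exp (g j z)) ⊤ r
        ≤ K * (1 + Real.log (R * T R / (R - r)))) := by
    intro j
    by_cases hj : j ∈ S
    · obtain ⟨b, hb, c, hc, b0, c0, h⟩ := hcomm j hj
      rw [mul_one] at h
      obtain ⟨K, hK, h'⟩ := quotient_characteristic hT hb hc b0 c0 h
      exact ⟨K, hK, fun _ => h'⟩
    · exact ⟨0, le_rfl, fun h => absurd h hj⟩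
  choose K hK0 hK using hK
  have hsK : 0 ≤ ∑ j ∈ S, K j := Finset.sum_nonneg fun j _ => hK0 j
  obtain ⟨C, hC⟩ := gauge_le_log hT (K := 1 + ∑ j ∈ S, K j) (by positivity) (by
    intro r R hr hR
    have hl := Real.log_nonneg (hT.one_le_ratio hr hR)
    rw [hTS r hr, add_mul, Finset.sum_mul]
    exact add_le_add (by linarith) (Finset.sum_le_sum fun j hj => hK j hj r R hr hR))
  intro j hj z
  obtain ⟨L, hL, hb⟩ := norm_log_le hT (hg j) (by
    intro r hr
    rw [hTS r hr]
    have := Finset.single_le_sum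
      (f := fun j => characteristic (fun z => Complex.exp (g j z)) ⊤ r)
      (fun j _ => characteristic_nonneg hr) hj
    beta_reduce at this
    linarith)
  exact const_of_log_bound (hg j) hL hb hC z

/-- Proportionality of functions, with a nonzero constant. -/
def Proportional (u v : ℂ → ℂ) : Prop := ∃ c : ℂ, c ≠ 0 ∧ ∀ z, u z = c * v z

lemma Proportional.refl (u : ℂ → ℂ) : Proportional u u := ⟨1, one_ne_zero, fun z => by simp⟩

lemma Proportional.symm {u v : ℂ → ℂ} (h : Proportional u v) : Proportional v u := by
  obtain ⟨c, c0, h⟩ := h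
  exact ⟨c⁻¹, inv_ne_zero c0, fun z => by rw [h, inv_mul_cancel_left₀ c0]⟩

lemma Proportional.trans {u v w : ℂ → ℂ} (h : Proportional u v) (h' : Proportional v w) :
    Proportional u w := by
  obtain ⟨c, c0, h⟩ := h
  obtain ⟨d, d0, h'⟩ := h'
  exact ⟨c * d, mul_ne_zero c0 d0, fun z => by rw [h, h', mul_assoc]⟩

/-- A vanishing sum of zero-free entire functions either consists of proportional functions only,
or every term, together with all terms proportional to it, lies in a strictly shorter vanishing
subsum. -/
lemma dichotomy {ι : Type*} (S : Finset ι) (f : ι → ℂ → ℂ) (hf : ∀ j, Differentiable ℂ (f j))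
    (hnz : ∀ j z, f j z ≠ 0) (hsum : ∑ j ∈ S, f j = 0) (k : ι) (hk : k ∈ S) :
    (∀ j ∈ S, Proportional (f j) (f k)) ∨
      ∀ i ∈ S, ∃ S' ⊂ S, ∑ j ∈ S', f j = 0 ∧ ∀ j ∈ S, Proportional (f j) (f i) → j ∈ S' := by
  classical
  choose g hg hgexp using fun j => exists_log ((hf j).div (hf k) (hnz k))
    (fun z => div_ne_zero (hnz j z) (hnz k z))
  let h : ι → ℂ → ℂ := fun j z => Complex.exp (g j z)
  have hfh : ∀ j, f j = h j * f k := fun j => by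
    funext z
    have := hgexp j z
    simp only [Pi.mul_apply, h, ← this]
    rw [Pi.div_apply, div_mul_cancel₀ _ (hnz k z)]
  have hd : ∀ j, Differentiable ℂ (h j) := fun j => (hg j).cexp
  have h0 : ∀ j z, h j z ≠ 0 := fun j z => Complex.exp_ne_zero _
  have hk1 : h k = 1 := by
    funext z
    exact (hgexp k z).symm.trans (div_self (hnz k z))
  have cancel : ∀ G : ℂ → ℂ, G * f k = 0 → G = 0 := fun G hG => by
    funext z
    exact (mul_eq_zero.1 (congrFun hG z)).resolve_right (hnz k z)
  let T : ℝ → ℝ := fun r => 1 + ∑ j ∈ S, characteristic (h j) ⊤ r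
  have hT : IsGauge T :=
    { mono := fun r hr R hR hrR => by
        refine add_le_add le_rfl (Finset.sum_le_sum fun j _ => ?_)
        rw [mem_Ici] at hr hR
        exact characteristic_monotoneOn (meromorphic_of_entire (hd j))
          (mem_Ioi.2 (by linarith)) (mem_Ioi.2 (by linarith)) hrR
      one_le := fun r hr =>
        le_add_of_nonneg_right (Finset.sum_nonneg fun j _ => characteristic_nonneg hr) }
  let A := slowAlgebra hT
  have hA : ∀ a ∈ A, Differentiable ℂ a := fun a ha => ha.1
  have hD : ∀ a ∈ A, deriv a ∈ A := fun a ha => Slow.deriv hT ha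
  by_cases hall : ∀ j ∈ S, Comm A (h j) (h k)
  · left
    intro j hj
    have := const_of_comm_one hT S g hg (fun r _ => rfl)
      (fun j hj => by have := hall j hj; rwa [hk1] at this) j hj
    refine ⟨Complex.exp (g j 0), Complex.exp_ne_zero _, fun z => ?_⟩
    rw [hfh j, Pi.mul_apply, ← this z]
  · right
    push Not at hall
    obtain ⟨k', hk', hkk'⟩ := hall
    intro i hi
    let s : Setoid ι :=
      { r := fun i j => Comm A (h i) (h j)
        iseqv := ⟨fun _ => Comm.refl _ _, Comm.symm, Comm.trans hA⟩ }
    let cl : ι → Quotient s := Quotient.mk s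
    have hcl : ∀ i j, cl i = cl j ↔ Comm A (h i) (h j) := fun i j => Quotient.eq
    refine ⟨S.filter (fun j => cl j = cl i), ?_, ?_, ?_⟩
    · refine (Finset.filter_subset _ _).ssubset_of_ne fun heq => hkk' ?_
      have e1 := (Finset.filter_eq_self.1 heq) k hk
      have e2 := (Finset.filter_eq_self.1 heq) k' hk'
      exact (hcl _ _).1 (e2.trans e1.symm)
    · have hone : ∑ j ∈ S, (1 : ℂ → ℂ) * h j = 0 := by
        apply cancel
        rw [← hsum, Finset.sum_mul]
        exact Finset.sum_congr rfl fun j _ => by rw [one_mul, ← hfh j]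
      have hs := class_sum_eq_zero hA hD h (fun j => deriv (g j)) hd h0 cl hcl S
        (fun j hj => hD _ (slow_log hT (hg j) (by
          intro r hr
          have := Finset.single_le_sum (f := fun j => characteristic (h j) ⊤ r)
            (fun j _ => characteristic_nonneg hr) hj
          exact this.trans (le_add_of_nonneg_left zero_le_one))))
        (fun j _ => by
          funext z
          rw [((hg j z).hasDerivAt.cexp).deriv, mul_comm]
          rfl)
        (fun _ => 1) (fun _ _ => A.one_mem) hone (cl i)
      have : ∑ j ∈ S with cl j = cl i, f j = (∑ j ∈ S with cl j = cl i, 1 * h j) * f k := by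
        rw [Finset.sum_mul]
        exact Finset.sum_congr rfl fun j _ => by rw [one_mul, ← hfh j]
      rw [this, hs, zero_mul]
    · rintro j hj ⟨c, c0, hc⟩
      rw [Finset.mem_filter, hcl]
      -- Proportional terms are commensurable because `A` contains the constants.
      refine ⟨hj, 1, A.one_mem, algebraMap ℂ _ c, A.algebraMap_mem c, one_ne_zero, ?_, ?_⟩
      · exact fun h => c0 (congrFun h 0)
      · funext z
        have : h j z * f k z = c * (h i z * f k z) := by
          have := hc z
          rwa [hfh j, hfh i] at this
        simp only [Pi.one_apply, one_mul, Pi.mul_apply, Pi.algebraMap_apply, Algebra.algebraMap_self,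
          RingHom.id_apply]
        rw [← mul_assoc] at this
        exact mul_right_cancel₀ (hnz k z) this

open scoped Classical in
lemma proportional_sum_eq_zero {ι : Type*} (f : ι → ℂ → ℂ) (hf : ∀ j, Differentiable ℂ (f j))
    (hnz : ∀ j z, f j z ≠ 0) (S : Finset ι) (hsum : ∑ j ∈ S, f j = 0) (i : ι) :
    ∑ j ∈ S with Proportional (f j) (f i), f j = 0 := by
  induction S using Finset.strongInduction with
  | H S ih =>
    by_cases hex : ∃ j₀ ∈ S, Proportional (f j₀) (f i)
    · obtain ⟨j₀, hj₀, hp⟩ := hex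
      rcases dichotomy S f hf hnz hsum j₀ hj₀ with h | h
      · rwa [Finset.filter_true_of_mem fun j hj => (h j hj).trans hp]
      · obtain ⟨S', hS', hs, hm⟩ := h j₀ hj₀
        rw [← ih S' hS' hs]
        congr 1
        ext j
        simp only [Finset.mem_filter]
        exact ⟨fun hj => ⟨hm j hj.1 (hj.2.trans hp.symm), hj.2⟩,
          fun hj => ⟨hS'.1 hj.1, hj.2⟩⟩
    · push Not at hex
      rw [Finset.filter_false_of_mem hex, Finset.sum_empty]

end

end BorelAux

/-- **Borel's theorem.** If `f₁, …, f_p` are zero-free entire functions with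
`f₁ + ⋯ + f_p = 0`, then the index set can be partitioned into classes such
that within each class all functions are proportional and the sum over each
class vanishes identically. -/
theorem borel_theorem (p : ℕ) (f : Fin p → ℂ → ℂ)
    (hf : ∀ j, Differentiable ℂ (f j))
    (hnz : ∀ j, ∀ z : ℂ, f j z ≠ 0)
    (hsum : ∀ z : ℂ, ∑ j, f j z = 0) :
    ∃ P : Finset (Finset (Fin p)),
      (∀ i : Fin p, ∃! I : Finset (Fin p), I ∈ P ∧ i ∈ I) ∧
      (∀ I ∈ P, ∀ i ∈ I, ∀ j ∈ I, ∃ c : ℂ, c ≠ 0 ∧ ∀ z : ℂ, f i z = c * f j z) ∧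
      (∀ I ∈ P, ∀ z : ℂ, ∑ i ∈ I, f i z = 0) := by
  classical
  let cls : Fin p → Finset (Fin p) := fun i =>
    Finset.univ.filter fun j => BorelAux.Proportional (f j) (f i)
  have hmem : ∀ i j, j ∈ cls i ↔ BorelAux.Proportional (f j) (f i) := fun i j => by simp [cls]
  have hself : ∀ i, i ∈ cls i := fun i => (hmem i i).2 (BorelAux.Proportional.refl _)
  refine ⟨Finset.univ.image cls, fun i => ⟨cls i, ⟨by simp, hself i⟩, ?_⟩, ?_, ?_⟩
  · rintro I ⟨hI, hiI⟩
    obtain ⟨k, -, rfl⟩ := Finset.mem_image.1 hI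
    have hik := (hmem k i).1 hiI
    ext j
    rw [hmem, hmem]
    exact ⟨fun h => h.trans hik.symm, fun h => h.trans hik⟩
  · intro I hI i hi j hj
    obtain ⟨k, -, rfl⟩ := Finset.mem_image.1 hI
    exact ((hmem k i).1 hi).trans ((hmem k j).1 hj).symm
  · intro I hI z
    obtain ⟨k, -, rfl⟩ := Finset.mem_image.1 hI
    have hs : ∑ j, f j = 0 := by
      funext z
      simpa using hsum z
    have := congrFun (BorelAux.proportional_sum_eq_zero f hf hnz Finset.univ hs k) z
    simpa [cls] using this
end
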